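/- arXiv:1508.01961 — 2 statements merged into one kernel-verified Lean document; each statement's English description precedes it below -/
import Mathlib

section
/- Let θ be a well-founded tree on ℕ, let X be a Banach space with an unconditional basis (e_s)_{s∈θ} indexed by θ, and let Y be an infinite-dimensional closed subspace of X. Then Y contains a basic sequence (y_k) that is equivalent to a semi-normalized block sequence (x_k) of (e_s)_{s∈θ} whose supports are pairwise completely incomparable subsets of θ. -/
def TreeComparable (s t : List ℕ) : Prop := s <+: t ∨ t <+: s

def IsTree (θ : Set (List ℕ)) : Prop := ∀ s ∈ θ, ∀ t : List ℕ, t <+: s → t ∈ θ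

def CompIncomp (A B : Set (List ℕ)) : Prop := ∀ s ∈ A, ∀ t ∈ B, ¬ TreeComparable s t

def HasBranch (θ : Set (List ℕ)) : Prop := ∃ β : ℕ → ℕ, ∀ n, (List.range n).map β ∈ θ

def CompatibleEnum (σ : ℕ ≃ List ℕ) : Prop := ∀ s t : List ℕ, s <+: t → σ.symm s ≤ σ.symm t

def IsBasicSeq {E : Type*} [NormedAddCommGroup E] [NormedSpace ℝ E] (e : ℕ → E) : Prop :=
  (∀ n, e n ≠ 0) ∧ ∃ C : ℝ, 0 < C ∧ ∀ (a : ℕ → ℝ) (n m : ℕ), n ≤ m →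
    ‖∑ i ∈ Finset.range n, a i • e i‖ ≤ C * ‖∑ i ∈ Finset.range m, a i • e i‖

/-!
An operator is strictly singular if it is bounded below on no infinite-dimensional subspace. Such
operators are closed under sums, since every infinite-dimensional subspace contains an
infinite-dimensional one on which a given strictly singular operator has small norm.

Let `P_A` be the projection onto the coordinates in `A`, restricted to `Y`. The projection onto all
coordinates is not strictly singular, so following children whose subtree projection is not strictly
singular either would produce a branch. Well-foundedness therefore gives a node `a` whose subtree
projection is not strictly singular although those of all its children are. A node `s` strictly
above `a` lies above some child of `a`, and the nodes `t` that are comparable with `s` or enumerated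
no later than `s` lie in the subtree of that child together with a finite set, so the projection
onto them is strictly singular. By additivity the same holds for finitely many `s` at once, and a
gliding hump inside the subtree of `a` produces unit vectors of `Y` which, projected, are small
perturbations of blocks with incomparable supports. Unconditionality makes the perturbation an
equivalence of sequences.
-/

theorem exists_seq_of_forall_nat_finset_exists {α : Type*} {p : ℕ → α → Prop} (hp : Antitone p)
    {r : α → α → Prop}
    (h : ∀ (n : ℕ) (s : Finset α), (∀ x ∈ s, p 0 x) → ∃ y, p n y ∧ ∀ x ∈ s, r x y) :
    ∃ f : ℕ → α, (∀ n, p n (f n)) ∧ ∀ m n, m < n → r (f m) (f n) := by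
  classical
  obtain ⟨f, hpf, hrf⟩ := exists_seq_of_forall_finset_exists (fun a : ℕ × α => p a.1 a.2)
    (fun a b => a.1 < b.1 ∧ r a.2 b.2) fun s hs => by
      obtain ⟨y, hpy, hry⟩ := h (s.sup Prod.fst + 1) (s.image Prod.snd) <| by
        simp only [Finset.mem_image, forall_exists_index, and_imp]
        rintro _ a ha rfl
        exact hp (Nat.zero_le a.1) _ (hs a ha)
      exact ⟨(_, y), hpy, fun a ha =>
        ⟨Nat.lt_succ_of_le (Finset.le_sup ha), hry _ (Finset.mem_image_of_mem _ ha)⟩⟩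
  have hmono : StrictMono fun n => (f n).1 := fun m n hmn => (hrf m n hmn).1
  exact ⟨fun n => (f n).2, fun n => hp hmono.le_apply _ (hpf n), fun m n hmn => (hrf m n hmn).2⟩

theorem not_finiteDimensional_inf_ker {K V W : Type*} [DivisionRing K] [AddCommGroup V]
    [Module K V] [AddCommGroup W] [Module K W] (g : V →ₗ[K] W) [FiniteDimensional K g.range]
    {Z : Submodule K V} (hZ : ¬ FiniteDimensional K Z) :
    ¬ FiniteDimensional K (Z ⊓ g.ker : Submodule K V) := fun hker =>
  hZ <| Module.Finite.iff_fg.2 <| Submodule.fg_of_fg_map_of_fg_inf_ker g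
    (Module.Finite.iff_fg.1 <| Submodule.finiteDimensional_of_le g.map_le_range)
    (Module.Finite.iff_fg.1 hker)

theorem not_finiteDimensional_span_range {K V ι : Type*} [DivisionRing K] [AddCommGroup V]
    [Module K V] [Infinite ι] {w : ι → V} (hw : LinearIndependent K w) :
    ¬ FiniteDimensional K (Submodule.span K (Set.range w)) := fun _ =>
  not_finite_iff_infinite.2 ‹Infinite ι› (linearIndependent_span hw).finite

section StrictlySingular

variable {𝕜 E F G : Type*} [RCLike 𝕜] [NormedAddCommGroup E] [NormedSpace 𝕜 E]
  [NormedAddCommGroup F] [NormedSpace 𝕜 F] [NormedAddCommGroup G] [NormedSpace 𝕜 G]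

/-- A bounded operator is strictly singular if it is not bounded below on any infinite-dimensional
subspace of its domain. The subspaces are not required to be closed. -/
def IsStrictlySingular (T : E →L[𝕜] F) : Prop :=
  ∀ Z : Submodule 𝕜 E, ¬ FiniteDimensional 𝕜 Z → ∀ δ > 0, ∃ z ∈ Z, ‖T z‖ < δ * ‖z‖

theorem not_isStrictlySingular_of_bounded_below {T : E →L[𝕜] F} (hE : ¬ FiniteDimensional 𝕜 E)
    {δ : ℝ} (hδ : 0 < δ) (hT : ∀ x, δ * ‖x‖ ≤ ‖T x‖) : ¬ IsStrictlySingular T := fun h => by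
  have htop : ¬ FiniteDimensional 𝕜 (⊤ : Submodule 𝕜 E) := by
    rwa [FiniteDimensional, Module.Finite.iff_fg, ← Module.finite_def]
  obtain ⟨z, -, hz⟩ := h ⊤ htop δ hδ
  exact (hT z).not_gt hz

theorem isStrictlySingular_of_finiteDimensional_range (T : E →L[𝕜] F)
    [FiniteDimensional 𝕜 (T : E →ₗ[𝕜] F).range] : IsStrictlySingular T := by
  intro Z hZ δ hδ
  have hker : Z ⊓ (T : E →ₗ[𝕜] F).ker ≠ ⊥ := fun hbot =>
    not_finiteDimensional_inf_ker (T : E →ₗ[𝕜] F) hZ (hbot ▸ inferInstance)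
  obtain ⟨z, ⟨hzZ, hTz⟩, hz0⟩ := Submodule.exists_mem_ne_zero_of_ne_bot hker
  refine ⟨z, hzZ, ?_⟩
  rw [show T z = 0 from hTz, norm_zero]
  exact mul_pos hδ (norm_pos_iff.2 hz0)

theorem isStrictlySingular_zero : IsStrictlySingular (0 : E →L[𝕜] F) := by
  have : FiniteDimensional 𝕜 ((0 : E →L[𝕜] F) : E →ₗ[𝕜] F).range := by
    rw [ContinuousLinearMap.toLinearMap_zero, LinearMap.range_zero]
    infer_instance
  exact isStrictlySingular_of_finiteDimensional_range 0

namespace IsStrictlySingular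

theorem clm_comp {T : E →L[𝕜] F} (hT : IsStrictlySingular T) (S : F →L[𝕜] G) :
    IsStrictlySingular (S ∘L T) := by
  intro Z hZ δ hδ
  obtain ⟨z, hzZ, hz⟩ := hT Z hZ (δ / (‖S‖ + 1)) (by positivity)
  refine ⟨z, hzZ, ?_⟩
  calc ‖S (T z)‖ ≤ (‖S‖ + 1) * ‖T z‖ :=
        (S.le_opNorm _).trans (by gcongr; exact (lt_add_one _).le)
    _ < (‖S‖ + 1) * (δ / (‖S‖ + 1) * ‖z‖) := by gcongr
    _ = δ * ‖z‖ := by field_simp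

theorem exists_norm_eq_one {T : E →L[𝕜] F} (hT : IsStrictlySingular T) {Z : Submodule 𝕜 E}
    (hZ : ¬ FiniteDimensional 𝕜 Z) {δ : ℝ} (hδ : 0 < δ) : ∃ z ∈ Z, ‖z‖ = 1 ∧ ‖T z‖ < δ := by
  obtain ⟨z, hzZ, hz⟩ := hT Z hZ δ hδ
  have hz0 : z ≠ 0 := by
    rintro rfl
    simp at hz
  refine ⟨(‖z‖ : 𝕜)⁻¹ • z, Z.smul_mem _ hzZ, norm_smul_inv_norm hz0, ?_⟩
  rwa [map_smul, norm_smul, norm_inv, RCLike.norm_ofReal, abs_norm,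
    inv_mul_lt_iff₀ (norm_pos_iff.2 hz0), mul_comm]

end IsStrictlySingular

theorem apply_linearCombination_of_triangular {K V : Type*} [Semiring K] [AddCommMonoid V]
    [Module K V] {w : ℕ → V} {f : ℕ → V →ₗ[K] K} (hdiag : ∀ k, f k (w k) = 1)
    (htri : ∀ j k, j < k → f j (w k) = 0) (c : ℕ →₀ K) (k : ℕ) :
    f k (Finsupp.linearCombination K w c) = ∑ i ∈ Finset.range k, c i * f k (w i) + c k := by
  have hsum : f k (Finsupp.linearCombination K w c) =
      ∑ i ∈ Finset.range (k + 1), c i * f k (w i) := by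
    simp only [Finsupp.linearCombination_apply, Finsupp.sum, map_sum, map_smul, smul_eq_mul]
    refine Finset.sum_congr_of_eq_on_inter (fun i _ hi => ?_) (fun i _ hi => ?_) fun _ _ _ => rfl
    · rw [htri k i (not_lt.1 (mt Finset.mem_range.2 hi)), mul_zero]
    · rw [Finsupp.notMem_support_iff.1 hi, zero_mul]
  rw [hsum, Finset.sum_range_succ, hdiag, mul_one]

theorem norm_coeff_le_two_pow_mul {w : ℕ → E} {f : ℕ → E →L[𝕜] 𝕜} (hw : ∀ k, ‖w k‖ ≤ 1)
    (hf : ∀ k, ‖f k‖ ≤ 1) (hdiag : ∀ k, f k (w k) = 1) (htri : ∀ j k, j < k → f j (w k) = 0)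
    (c : ℕ →₀ 𝕜) (k : ℕ) : ‖c k‖ ≤ 2 ^ k * ‖Finsupp.linearCombination 𝕜 w c‖ := by
  induction k using Nat.strong_induction_on with
  | _ k ih =>
  set z := Finsupp.linearCombination 𝕜 w c
  have hfz : f k z = ∑ i ∈ Finset.range k, c i * f k (w i) + c k :=
    apply_linearCombination_of_triangular (f := fun j => (f j : E →ₗ[𝕜] 𝕜)) hdiag htri c k
  have hfw : ∀ i, ‖f k (w i)‖ ≤ 1 := fun i =>
    (f k).unit_le_opNorm (w i) (hw i) |>.trans (hf k)
  have hgeom : ∑ i ∈ Finset.range k, (2 : ℝ) ^ i = 2 ^ k - 1 := by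
    rw [geom_sum_eq (by norm_num)]
    norm_num
  calc ‖c k‖ = ‖f k z - ∑ i ∈ Finset.range k, c i * f k (w i)‖ := by
        rw [hfz, add_sub_cancel_left]
    _ ≤ ‖f k z‖ + ∑ i ∈ Finset.range k, ‖c i * f k (w i)‖ :=
        (norm_sub_le _ _).trans (by gcongr; exact norm_sum_le _ _)
    _ ≤ ‖z‖ + ∑ i ∈ Finset.range k, 2 ^ i * ‖z‖ := by
        gcongr with i hi
        · exact (f k).le_of_opNorm_le (hf k) z |>.trans_eq (one_mul _)
        · rw [norm_mul]
          exact (mul_le_of_le_one_right (norm_nonneg _) (hfw i)).trans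
            (ih i (Finset.mem_range.1 hi))
    _ = 2 ^ k * ‖z‖ := by rw [← Finset.sum_mul, hgeom]; ring

theorem linearIndependent_of_norm_coeff_le {ι : Type*} {w : ι → E} {b : ι → ℝ}
    (h : ∀ (c : ι →₀ 𝕜) (k : ι), ‖c k‖ ≤ b k * ‖Finsupp.linearCombination 𝕜 w c‖) :
    LinearIndependent 𝕜 w := by
  refine linearIndependent_iff.2 fun c hc => Finsupp.ext fun k => ?_
  simpa [hc] using h c k

namespace IsStrictlySingular

variable {T : E →L[𝕜] F} {Z : Submodule 𝕜 E}

theorem exists_triangular_seq (hT : IsStrictlySingular T) (hZ : ¬ FiniteDimensional 𝕜 Z)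
    {η : ℕ → ℝ} (hη : Antitone η) (hη_pos : ∀ n, 0 < η n) :
    ∃ (w : ℕ → E) (f : ℕ → E →L[𝕜] 𝕜),
      (∀ k, w k ∈ Z ∧ ‖w k‖ = 1 ∧ ‖f k‖ = 1 ∧ f k (w k) = 1 ∧ ‖T (w k)‖ ≤ η k) ∧
      ∀ j k, j < k → f j (w k) = 0 := by
  obtain ⟨q, hq, htri⟩ := exists_seq_of_forall_nat_finset_exists
    (p := fun n (q : E × (E →L[𝕜] 𝕜)) =>
      q.1 ∈ Z ∧ ‖q.1‖ = 1 ∧ ‖q.2‖ = 1 ∧ q.2 q.1 = 1 ∧ ‖T q.1‖ ≤ η n)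
    (fun m n hmn q ⟨hqZ, hq, hf, hfq, hTq⟩ => ⟨hqZ, hq, hf, hfq, hTq.trans (hη hmn)⟩)
    (r := fun q q' => q.2 q'.1 = 0) fun n s _ => by
      let g : E →ₗ[𝕜] s → 𝕜 := LinearMap.pi fun q => (q.1.2 : E →ₗ[𝕜] 𝕜)
      obtain ⟨w, ⟨hwZ, hgw⟩, hw, hTw⟩ :=
        hT.exists_norm_eq_one (not_finiteDimensional_inf_ker g hZ) (hη_pos n)
      obtain ⟨f, hf, hfw⟩ := exists_dual_vector 𝕜 w (by simp [hw])
      exact ⟨(w, f), ⟨hwZ, hw, hf, by simp [hfw, hw], hTw.le⟩,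
        fun q hq => congrFun (show g w = 0 from hgw) ⟨q, hq⟩⟩
  exact ⟨fun k => (q k).1, fun k => (q k).2, hq, htri⟩

theorem exists_submodule_norm_le (hT : IsStrictlySingular T) (hZ : ¬ FiniteDimensional 𝕜 Z)
    {ε : ℝ} (hε : 0 < ε) :
    ∃ W ≤ Z, ¬ FiniteDimensional 𝕜 W ∧ ∀ z ∈ W, ‖T z‖ ≤ ε * ‖z‖ := by
  obtain ⟨w, f, hwf, htri⟩ := hT.exists_triangular_seq hZ (η := fun n => ε / 2 / 4 ^ n)
    (fun m n hmn => by dsimp only; gcongr; norm_num) (fun n => by positivity)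
  choose hwZ hw hf hdiag hTw using hwf
  have hcoeff := norm_coeff_le_two_pow_mul (fun k => (hw k).le) (fun k => (hf k).le) hdiag htri
  refine ⟨Submodule.span 𝕜 (Set.range w),
    Submodule.span_le.2 (Set.range_subset_iff.2 hwZ),
    not_finiteDimensional_span_range (linearIndependent_of_norm_coeff_le hcoeff), fun z hz => ?_⟩
  rw [← Finsupp.range_linearCombination] at hz
  obtain ⟨c, rfl⟩ := hz
  set N := ‖Finsupp.linearCombination 𝕜 w c‖
  calc ‖T (Finsupp.linearCombination 𝕜 w c)‖ = ‖∑ k ∈ c.support, c k • T (w k)‖ := by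
        simp only [Finsupp.linearCombination_apply, Finsupp.sum, map_sum, map_smul]
    _ ≤ ∑ k ∈ c.support, ‖c k‖ * ‖T (w k)‖ :=
        norm_sum_le_of_le _ fun k _ => (norm_smul _ _).le
    _ ≤ ∑ k ∈ c.support, 2 ^ k * N * (ε / 2 / 4 ^ k) := by
        gcongr with k
        exacts [hcoeff c k, hTw k]
    _ = (∑ k ∈ c.support, ε / 2 / 2 ^ k) * N := by
        rw [Finset.sum_mul]
        refine Finset.sum_congr rfl fun k _ => ?_
        rw [show (4 : ℝ) = 2 * 2 by norm_num, mul_pow]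
        field_simp
    _ ≤ ε * N := by
        gcongr
        exact sum_le_hasSum _ (fun k _ => by positivity) (hasSum_geometric_two' ε)

theorem add (hT : IsStrictlySingular T) {S : E →L[𝕜] F} (hS : IsStrictlySingular S) :
    IsStrictlySingular (T + S) := by
  intro Z hZ δ hδ
  obtain ⟨W, hWZ, hW, hTW⟩ := hT.exists_submodule_norm_le hZ (half_pos hδ)
  obtain ⟨z, hzW, hSz⟩ := hS W hW (δ / 2) (half_pos hδ)
  refine ⟨z, hWZ hzW, ?_⟩
  calc ‖T z + S z‖ ≤ ‖T z‖ + ‖S z‖ := norm_add_le _ _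
    _ < δ / 2 * ‖z‖ + δ / 2 * ‖z‖ := add_lt_add_of_le_of_lt (hTW z hzW) hSz
    _ = δ * ‖z‖ := by ring

end IsStrictlySingular

end StrictlySingular

section UnconditionalFamily

/-- `IsUnconditionalFamily 𝕜 e M` says that `e` spans a dense subspace and that restricting a finite
linear combination of `e` to a set of indices increases its norm at most by the factor `M`. The
vectors may vanish, so that a basis indexed by a subset of `ι` can be extended by zero to `ι`. -/
structure IsUnconditionalFamily (𝕜 : Type*) {ι X : Type*} [NormedField 𝕜] [NormedAddCommGroup X]
    [NormedSpace 𝕜 X] (e : ι → X) (M : ℝ) : Prop where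
  pos : 0 < M
  dense_span : Dense (Submodule.span 𝕜 (Set.range e) : Set X)
  norm_indicator_le : ∀ (A : Set ι) (z : ι →₀ 𝕜),
    ‖Finsupp.linearCombination 𝕜 (A.indicator e) z‖ ≤ M * ‖Finsupp.linearCombination 𝕜 e z‖

variable {𝕜 ι X : Type*} [NontriviallyNormedField 𝕜] [NormedAddCommGroup X] [NormedSpace 𝕜 X]

/-- The coordinate projection `P_A` of a family `e`: the bounded operator with `P_A (e i) = e i` for
`i ∈ A` and `P_A (e i) = 0` otherwise. It is a junk value unless `e` is an unconditional family. -/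
noncomputable def coordProj (𝕜 : Type*) {ι X : Type*} [NontriviallyNormedField 𝕜]
    [NormedAddCommGroup X] [NormedSpace 𝕜 X] [CompleteSpace X] (e : ι → X) (A : Set ι) :
    X →L[𝕜] X :=
  (Finsupp.linearCombination 𝕜 (A.indicator e)).extendOfNorm (Finsupp.linearCombination 𝕜 e)

namespace IsUnconditionalFamily

variable {e : ι → X} {M : ℝ}

theorem denseRange_linearCombination (he : IsUnconditionalFamily 𝕜 e M) :
    DenseRange (Finsupp.linearCombination 𝕜 e) := by
  rw [DenseRange, ← LinearMap.coe_range, Finsupp.range_linearCombination]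
  exact he.dense_span

theorem clm_ext (he : IsUnconditionalFamily 𝕜 e M) {S T : X →L[𝕜] X}
    (h : ∀ i, S (e i) = T (e i)) : S = T :=
  ContinuousLinearMap.ext_on he.dense_span (Set.forall_mem_range.2 h)

variable [CompleteSpace X]

theorem coordProj_linearCombination (he : IsUnconditionalFamily 𝕜 e M) (A : Set ι) (z : ι →₀ 𝕜) :
    coordProj 𝕜 e A (Finsupp.linearCombination 𝕜 e z) =
      Finsupp.linearCombination 𝕜 (A.indicator e) z :=
  LinearMap.extendOfNorm_eq he.denseRange_linearCombination ⟨M, he.norm_indicator_le A⟩ z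

theorem coordProj_apply_self (he : IsUnconditionalFamily 𝕜 e M) (A : Set ι) (i : ι) :
    coordProj 𝕜 e A (e i) = A.indicator e i := by
  simpa using he.coordProj_linearCombination A (Finsupp.single i 1)

theorem norm_coordProj_apply_le (he : IsUnconditionalFamily 𝕜 e M) (A : Set ι) (x : X) :
    ‖coordProj 𝕜 e A x‖ ≤ M * ‖x‖ :=
  LinearMap.norm_extendOfNorm_apply_le he.denseRange_linearCombination M
    (he.norm_indicator_le A) x

theorem coordProj_comp_coordProj (he : IsUnconditionalFamily 𝕜 e M) (A B : Set ι) :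
    coordProj 𝕜 e A ∘L coordProj 𝕜 e B = coordProj 𝕜 e (A ∩ B) :=
  he.clm_ext fun i => by
    rw [ContinuousLinearMap.comp_apply, he.coordProj_apply_self, he.coordProj_apply_self,
      ← Set.indicator_indicator]
    by_cases hB : i ∈ B
    · by_cases hA : i ∈ A <;> simp [hA, hB, he.coordProj_apply_self]
    · by_cases hA : i ∈ A <;> simp [hA, hB]

theorem coordProj_coordProj (he : IsUnconditionalFamily 𝕜 e M) (A B : Set ι) (x : X) :
    coordProj 𝕜 e A (coordProj 𝕜 e B x) = coordProj 𝕜 e (A ∩ B) x :=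
  DFunLike.congr_fun (he.coordProj_comp_coordProj A B) x

theorem coordProj_univ (he : IsUnconditionalFamily 𝕜 e M) :
    coordProj 𝕜 e Set.univ = ContinuousLinearMap.id 𝕜 X :=
  he.clm_ext fun i => by simp [he.coordProj_apply_self]

theorem coordProj_eq_zero (he : IsUnconditionalFamily 𝕜 e M) {A : Set ι}
    (hA : ∀ i ∈ A, e i = 0) : coordProj 𝕜 e A = 0 :=
  he.clm_ext fun i => by
    rw [he.coordProj_apply_self]
    exact Set.indicator_apply_eq_zero.2 (hA i)

theorem coordProj_union (he : IsUnconditionalFamily 𝕜 e M) {A B : Set ι} (hAB : Disjoint A B) :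
    coordProj 𝕜 e (A ∪ B) = coordProj 𝕜 e A + coordProj 𝕜 e B :=
  he.clm_ext fun i => by
    simp only [add_apply, he.coordProj_apply_self,
      Set.indicator_union_of_disjoint hAB]

theorem coordProj_apply_mem_span [CompleteSpace 𝕜] (he : IsUnconditionalFamily 𝕜 e M) {A : Set ι}
    (hA : A.Finite) (x : X) : coordProj 𝕜 e A x ∈ Submodule.span 𝕜 (e '' A) := by
  have : FiniteDimensional 𝕜 (Submodule.span 𝕜 (e '' A)) :=
    FiniteDimensional.span_of_finite 𝕜 (hA.image e)
  have hspan : Submodule.span 𝕜 (Set.range (A.indicator e)) ≤ Submodule.span 𝕜 (e '' A) := by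
    refine Submodule.span_le.2 (Set.range_subset_iff.2 fun i => ?_)
    by_cases hi : i ∈ A
    · simpa [hi] using Submodule.subset_span (Set.mem_image_of_mem e hi)
    · simp [hi]
  refine he.denseRange_linearCombination.induction_on x
    ((Submodule.span 𝕜 (e '' A)).closed_of_finiteDimensional.preimage
      (coordProj 𝕜 e A).continuous) fun z => ?_
  rw [he.coordProj_linearCombination]
  exact hspan ((Finsupp.mem_span_range_iff_exists_finsupp).2 ⟨z, rfl⟩)

theorem exists_finset_norm_sub_coordProj_lt (he : IsUnconditionalFamily 𝕜 e M) (x : X) {η : ℝ}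
    (hη : 0 < η) : ∃ F : Finset ι, ‖x - coordProj 𝕜 e F x‖ < η := by
  have hM := he.pos
  obtain ⟨z, hz⟩ := he.denseRange_linearCombination.exists_dist_lt x
    (show 0 < η / (1 + M) by positivity)
  set v := Finsupp.linearCombination 𝕜 e z with hv
  have hPv : coordProj 𝕜 e z.support v = v := by
    rw [he.coordProj_linearCombination, hv, Finsupp.linearCombination_apply,
      Finsupp.linearCombination_apply]
    exact Finsupp.sum_congr fun i hi => by rw [Set.indicator_of_mem (Finset.mem_coe.2 hi)]
  refine ⟨z.support, ?_⟩
  calc ‖x - coordProj 𝕜 e z.support x‖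
      = ‖(x - v) - coordProj 𝕜 e z.support (x - v)‖ := by
        rw [map_sub, hPv, sub_sub_sub_cancel_right]
    _ ≤ ‖x - v‖ + M * ‖x - v‖ :=
        (norm_sub_le _ _).trans (by gcongr; exact he.norm_coordProj_apply_le _ _)
    _ = dist x v * (1 + M) := by rw [dist_eq_norm]; ring
    _ < η := (lt_div_iff₀ (by positivity)).1 hz

theorem exists_finset_subset_diff_norm_sub_coordProj_lt (he : IsUnconditionalFamily 𝕜 e M)
    {A B : Set ι} {w : X} (hw : coordProj 𝕜 e A w = w) {η : ℝ} (hB : ‖coordProj 𝕜 e B w‖ < η) :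
    ∃ D : Finset ι, ↑D ⊆ A \ B ∧ ‖w - coordProj 𝕜 e D w‖ < η := by
  classical
  set w' := coordProj 𝕜 e (A \ B) w with hw'
  have hsplit : w = coordProj 𝕜 e B w + w' := by
    conv_lhs => rw [← hw, ← Set.inter_union_sdiff A B,
      he.coordProj_union (Set.disjoint_sdiff_inter.symm), add_apply,
      Set.inter_comm, ← he.coordProj_coordProj, hw]
  obtain ⟨F, hF⟩ := he.exists_finset_norm_sub_coordProj_lt w' (sub_pos.2 hB)
  refine ⟨F.filter (· ∈ A \ B), by simp [Set.subset_def], ?_⟩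
  have hPF : coordProj 𝕜 e F w' = coordProj 𝕜 e (F.filter (· ∈ A \ B)) w := by
    rw [hw', he.coordProj_coordProj, Finset.coe_filter]
    rfl
  calc ‖w - coordProj 𝕜 e (F.filter (· ∈ A \ B)) w‖
      = ‖coordProj 𝕜 e B w + (w' - coordProj 𝕜 e F w')‖ := by
        rw [hPF, ← add_sub_assoc, ← hsplit]
    _ ≤ ‖coordProj 𝕜 e B w‖ + ‖w' - coordProj 𝕜 e F w'‖ := norm_add_le _ _
    _ < η := lt_sub_iff_add_lt'.1 hF

theorem norm_sum_le_of_subset {κ : Type*} (he : IsUnconditionalFamily 𝕜 e M) {D : κ → Set ι}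
    (hD : Pairwise (Function.onFun Disjoint D)) {v : κ → X}
    (hv : ∀ k, coordProj 𝕜 e (D k) (v k) = v k) {s t : Finset κ} (hst : s ⊆ t) :
    ‖∑ k ∈ s, v k‖ ≤ M * ‖∑ k ∈ t, v k‖ := by
  have hmem : ∀ k ∈ s, coordProj 𝕜 e (⋃ j ∈ s, D j) (v k) = v k := fun k hk => by
    rw [← hv k, he.coordProj_coordProj,
      Set.inter_eq_right.2 (Set.subset_iUnion₂ (s := fun j (_ : j ∈ s) => D j) k hk)]
  have hnot_mem : ∀ k ∈ t, k ∉ s → coordProj 𝕜 e (⋃ j ∈ s, D j) (v k) = 0 := fun k _ hk => by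
    have hdisj : Disjoint (⋃ j ∈ s, D j) (D k) :=
      Set.disjoint_iUnion₂_left.2 fun j hj => hD (ne_of_mem_of_not_mem hj hk)
    rw [← hv k, he.coordProj_coordProj, hdisj.inter_eq,
      he.coordProj_eq_zero fun i hi => hi.elim, zero_apply]
  calc ‖∑ k ∈ s, v k‖ = ‖coordProj 𝕜 e (⋃ j ∈ s, D j) (∑ k ∈ t, v k)‖ := by
        rw [map_sum, ← Finset.sum_subset hst hnot_mem, Finset.sum_congr rfl hmem]
    _ ≤ M * ‖∑ k ∈ t, v k‖ := he.norm_coordProj_apply_le _ _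

end IsUnconditionalFamily

end UnconditionalFamily

section CoordProjStrictlySingular

variable {𝕜 ι E X : Type*} [RCLike 𝕜] [NormedAddCommGroup E] [NormedSpace 𝕜 E]
  [NormedAddCommGroup X] [NormedSpace 𝕜 X] [CompleteSpace X] {e : ι → X} {M : ℝ} {T : E →L[𝕜] X}
  {A B : Set ι}

namespace IsUnconditionalFamily

theorem isStrictlySingular_coordProj_comp_of_finite (he : IsUnconditionalFamily 𝕜 e M)
    (T : E →L[𝕜] X) (hA : A.Finite) : IsStrictlySingular (coordProj 𝕜 e A ∘L T) := by
  have : FiniteDimensional 𝕜 (Submodule.span 𝕜 (e '' A)) :=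
    FiniteDimensional.span_of_finite 𝕜 (hA.image e)
  have : FiniteDimensional 𝕜 ((coordProj 𝕜 e A ∘L T : E →L[𝕜] X) : E →ₗ[𝕜] X).range :=
    Submodule.finiteDimensional_of_le (S₂ := Submodule.span 𝕜 (e '' A)) <| by
      rintro _ ⟨x, rfl⟩
      exact he.coordProj_apply_mem_span hA (T x)
  exact isStrictlySingular_of_finiteDimensional_range _

theorem isStrictlySingular_coordProj_comp_of_subset (he : IsUnconditionalFamily 𝕜 e M)
    (hAB : A ⊆ B) (hB : IsStrictlySingular (coordProj 𝕜 e B ∘L T)) :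
    IsStrictlySingular (coordProj 𝕜 e A ∘L T) := by
  rw [← Set.inter_eq_left.2 hAB, ← he.coordProj_comp_coordProj, ContinuousLinearMap.comp_assoc]
  exact hB.clm_comp _

theorem isStrictlySingular_coordProj_comp_union (he : IsUnconditionalFamily 𝕜 e M)
    (hA : IsStrictlySingular (coordProj 𝕜 e A ∘L T))
    (hB : IsStrictlySingular (coordProj 𝕜 e B ∘L T)) :
    IsStrictlySingular (coordProj 𝕜 e (A ∪ B) ∘L T) := by
  rw [← Set.union_sdiff_self, he.coordProj_union Set.disjoint_sdiff_right,
    ContinuousLinearMap.add_comp]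
  exact hA.add (he.isStrictlySingular_coordProj_comp_of_subset Set.sdiff_subset hB)

theorem isStrictlySingular_coordProj_comp_biUnion {κ : Type*} (he : IsUnconditionalFamily 𝕜 e M)
    (s : Finset κ) {A : κ → Set ι}
    (hA : ∀ k ∈ s, IsStrictlySingular (coordProj 𝕜 e (A k) ∘L T)) :
    IsStrictlySingular (coordProj 𝕜 e (⋃ k ∈ s, A k) ∘L T) := by
  classical
  induction s using Finset.induction_on with
  | empty => exact he.isStrictlySingular_coordProj_comp_of_finite T (by simp)
  | insert k s _ ih =>
    rw [Finset.set_biUnion_insert]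
    exact he.isStrictlySingular_coordProj_comp_union (hA k (Finset.mem_insert_self k s))
      (ih fun j hj => hA j (Finset.mem_insert_of_mem hj))

end IsUnconditionalFamily

end CoordProjStrictlySingular

section Domination

variable {𝕜 E F G : Type*} [NontriviallyNormedField 𝕜] [NormedAddCommGroup E] [NormedSpace 𝕜 E]
  [NormedAddCommGroup F] [NormedSpace 𝕜 F] [NormedAddCommGroup G] [NormedSpace 𝕜 G]

/-- The sequence `u` is `K`-dominated by `v`: finite linear combinations of `u` have norm at most
`K` times that of the combinations of `v` with the same coefficients. Two sequences are equivalent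
when each is dominated by the other. -/
def IsDominatedBy (𝕜 : Type*) {E F : Type*} [NormedField 𝕜] [NormedAddCommGroup E]
    [NormedSpace 𝕜 E] [NormedAddCommGroup F] [NormedSpace 𝕜 F] (K : ℝ) (u : ℕ → E) (v : ℕ → F) :
    Prop :=
  ∀ (n : ℕ) (c : ℕ → 𝕜),
    ‖∑ i ∈ Finset.range n, c i • u i‖ ≤ K * ‖∑ i ∈ Finset.range n, c i • v i‖

namespace IsDominatedBy

variable {K L : ℝ} {u : ℕ → E} {v : ℕ → F} {w : ℕ → G}

theorem mono (h : IsDominatedBy 𝕜 K u v) (hKL : K ≤ L) : IsDominatedBy 𝕜 L u v := fun n c =>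
  (h n c).trans (by gcongr)

theorem trans (huv : IsDominatedBy 𝕜 K u v) (hK : 0 ≤ K) (hvw : IsDominatedBy 𝕜 L v w) :
    IsDominatedBy 𝕜 (K * L) u w := fun n c =>
  (huv n c).trans (by rw [mul_assoc]; gcongr; exact hvw n c)

theorem norm_le (h : IsDominatedBy 𝕜 K u v) (k : ℕ) : ‖u k‖ ≤ K * ‖v k‖ := by
  simpa [Pi.single_apply] using h (k + 1) (Pi.single k 1)

theorem inv_le_norm_and_norm_le (huv : IsDominatedBy 𝕜 K u v) (hvu : IsDominatedBy 𝕜 K v u)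
    (hK : 0 < K) {k : ℕ} (hu : ‖u k‖ = 1) : K⁻¹ ≤ ‖v k‖ ∧ ‖v k‖ ≤ K := by
  rw [inv_le_iff_one_le_mul₀' hK, ← hu]
  exact ⟨huv.norm_le k, by simpa only [hu, mul_one] using hvu.norm_le k⟩

end IsDominatedBy

theorem isDominatedBy_clm_comp (T : E →L[𝕜] F) (y : ℕ → E) :
    IsDominatedBy 𝕜 ‖T‖ (fun k => T (y k)) y := fun n c => by
  simpa only [map_sum, map_smul] using T.le_opNorm (∑ i ∈ Finset.range n, c i • y i)

theorem isDominatedBy_clm_comp_of_bounded_below {T : E →L[𝕜] F} {Z : Submodule 𝕜 E} {δ : ℝ}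
    (hδ : 0 < δ) (hT : ∀ z ∈ Z, δ * ‖z‖ ≤ ‖T z‖) {y : ℕ → E} (hy : ∀ k, y k ∈ Z) :
    IsDominatedBy 𝕜 δ⁻¹ y fun k => T (y k) := fun n c => by
  rw [← div_eq_inv_mul, le_div_iff₀' hδ]
  simpa only [map_sum, map_smul] using
    hT (∑ i ∈ Finset.range n, c i • y i) (Z.sum_mem fun k _ => Z.smul_mem _ (hy k))

theorem isDominatedBy_two_of_sum_norm_sub_le {v w : ℕ → E} {K ε : ℝ} (hKε : K * ε ≤ 1 / 2)
    (hcoeff : ∀ (n : ℕ) (c : ℕ → 𝕜), ∀ k < n, ‖c k‖ ≤ K * ‖∑ i ∈ Finset.range n, c i • v i‖)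
    (hε : ∀ n, ∑ k ∈ Finset.range n, ‖w k - v k‖ ≤ ε) :
    IsDominatedBy 𝕜 2 v w ∧ IsDominatedBy 𝕜 2 w v := by
  have hsub : ∀ (n : ℕ) (c : ℕ → 𝕜),
      ‖∑ i ∈ Finset.range n, c i • w i - ∑ i ∈ Finset.range n, c i • v i‖ ≤
        1 / 2 * ‖∑ i ∈ Finset.range n, c i • v i‖ := fun n c => by
    rcases n.eq_zero_or_pos with rfl | hn
    · simp
    set N := ‖∑ i ∈ Finset.range n, c i • v i‖
    have hKN : 0 ≤ K * N := (norm_nonneg _).trans (hcoeff n c 0 hn)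
    calc ‖∑ i ∈ Finset.range n, c i • w i - ∑ i ∈ Finset.range n, c i • v i‖
        = ‖∑ i ∈ Finset.range n, c i • (w i - v i)‖ := by
          simp only [smul_sub, Finset.sum_sub_distrib]
      _ ≤ ∑ i ∈ Finset.range n, ‖c i‖ * ‖w i - v i‖ :=
          norm_sum_le_of_le _ fun i _ => (norm_smul _ _).le
      _ ≤ ∑ i ∈ Finset.range n, K * N * ‖w i - v i‖ := by
          gcongr with i hi
          exact hcoeff n c i (Finset.mem_range.1 hi)
      _ ≤ K * N * ε := by
          rw [← Finset.mul_sum]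
          gcongr
          exact hε n
      _ = K * ε * N := by ring
      _ ≤ 1 / 2 * N := by gcongr
  refine ⟨fun n c => ?_, fun n c => ?_⟩
  · linarith [hsub n c, norm_le_norm_add_norm_sub (∑ i ∈ Finset.range n, c i • w i)
      (∑ i ∈ Finset.range n, c i • v i)]
  · linarith [hsub n c, norm_le_norm_add_norm_sub' (∑ i ∈ Finset.range n, c i • w i)
      (∑ i ∈ Finset.range n, c i • v i), norm_nonneg (∑ i ∈ Finset.range n, c i • v i)]

theorem IsBasicSeq.of_isDominatedBy [NormedSpace ℝ E] [NormedSpace ℝ F] {v : ℕ → E} {y : ℕ → F}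
    (hv : IsBasicSeq v) {K : ℝ} (hK : 0 < K) (hyv : IsDominatedBy ℝ K y v)
    (hvy : IsDominatedBy ℝ K v y) : IsBasicSeq y := by
  obtain ⟨hv0, C, hC, hvC⟩ := hv
  refine ⟨fun k hk => hv0 k ?_, K * (C * K), by positivity, fun c n m hnm => ?_⟩
  · simpa [hk] using hvy.norm_le k
  · calc ‖∑ i ∈ Finset.range n, c i • y i‖
        ≤ K * ‖∑ i ∈ Finset.range n, c i • v i‖ := hyv n c
      _ ≤ K * (C * (K * ‖∑ i ∈ Finset.range m, c i • y i‖)) := by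
          gcongr
          refine (hvC c n m hnm).trans ?_
          gcongr
          exact hvy m c
      _ = K * (C * K) * ‖∑ i ∈ Finset.range m, c i • y i‖ := by ring

end Domination

section BlockSequences

/-- `v` is a sequence of blocks of the family `e` supported by the finite sets `D k`, in the sense
that `P_{D k} (v k) = v k`, and every index of an earlier block is `r`-related to every index of a
later one. Taking for `r` the order of an enumeration of `ι` gives the block sequences of `e`. -/
structure IsBlockSeq (𝕜 : Type*) {ι X : Type*} [NontriviallyNormedField 𝕜] [NormedAddCommGroup X]
    [NormedSpace 𝕜 X] [CompleteSpace X] (e : ι → X) (r : ι → ι → Prop) (v : ℕ → X)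
    (D : ℕ → Finset ι) : Prop where
  coordProj_eq : ∀ k, coordProj 𝕜 e (D k) (v k) = v k
  rel : ∀ j k, j < k → ∀ s ∈ D j, ∀ t ∈ D k, r s t

namespace IsBlockSeq

variable {𝕜 ι X : Type*} [NontriviallyNormedField 𝕜] [NormedAddCommGroup X] [NormedSpace 𝕜 X]
  [CompleteSpace X] {e : ι → X} {M : ℝ} {r : ι → ι → Prop} {v : ℕ → X} {D : ℕ → Finset ι}

theorem norm_sum_le_of_subset (hv : IsBlockSeq 𝕜 e r v D) (he : IsUnconditionalFamily 𝕜 e M)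
    (hr : ∀ s, ¬ r s s) (c : ℕ → 𝕜) {s t : Finset ℕ} (hst : s ⊆ t) :
    ‖∑ k ∈ s, c k • v k‖ ≤ M * ‖∑ k ∈ t, c k • v k‖ := by
  have hD : Pairwise (Function.onFun Disjoint fun k => (D k : Set ι)) :=
    (pairwise_disjoint_on _).2 fun j k hjk => Set.disjoint_left.2 fun s hj hk =>
      hr s (hv.rel j k hjk s hj s hk)
  exact he.norm_sum_le_of_subset hD (fun k => by rw [map_smul, hv.coordProj_eq k]) hst

theorem norm_coeff_le (hv : IsBlockSeq 𝕜 e r v D) (he : IsUnconditionalFamily 𝕜 e M)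
    (hr : ∀ s, ¬ r s s) {a : ℝ} (ha : 0 < a) (hav : ∀ k, a ≤ ‖v k‖) (n : ℕ) (c : ℕ → 𝕜) (k : ℕ)
    (hk : k < n) : ‖c k‖ ≤ M / a * ‖∑ i ∈ Finset.range n, c i • v i‖ := by
  rw [div_mul_eq_mul_div, le_div_iff₀ ha]
  calc ‖c k‖ * a ≤ ‖c k • v k‖ := by
        rw [norm_smul]
        gcongr
        exact hav k
    _ = ‖∑ i ∈ {k}, c i • v i‖ := by rw [Finset.sum_singleton]
    _ ≤ M * ‖∑ i ∈ Finset.range n, c i • v i‖ :=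
        hv.norm_sum_le_of_subset he hr c (by simpa using hk)

theorem isBasicSeq [NormedSpace ℝ X] {e : ι → X} (hv : IsBlockSeq ℝ e r v D)
    (he : IsUnconditionalFamily ℝ e M) (hr : ∀ s, ¬ r s s) (hv0 : ∀ k, v k ≠ 0) : IsBasicSeq v :=
  ⟨hv0, M, he.pos, fun c _ _ hnm =>
    hv.norm_sum_le_of_subset he hr c (Finset.range_subset_range.2 hnm)⟩

end IsBlockSeq

namespace IsUnconditionalFamily

variable {𝕜 ι E X : Type*} [RCLike 𝕜] [NormedAddCommGroup E] [NormedSpace 𝕜 E]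
  [NormedAddCommGroup X] [NormedSpace 𝕜 X] [CompleteSpace X] {e : ι → X} {M : ℝ} {T : E →L[𝕜] X}
  {A : Set ι} {r : ι → ι → Prop}

theorem exists_gliding_hump (he : IsUnconditionalFamily 𝕜 e M) {Z : Submodule 𝕜 E}
    (hZ : ¬ FiniteDimensional 𝕜 Z) (hTA : ∀ x, coordProj 𝕜 e A (T x) = T x)
    (hr : ∀ s ∈ A, IsStrictlySingular (coordProj 𝕜 e {t | ¬ r s t} ∘L T)) {ε : ℝ} (hε : 0 < ε) :
    ∃ (y : ℕ → E) (D : ℕ → Finset ι), (∀ k, y k ∈ Z ∧ ‖y k‖ = 1) ∧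
      (∀ j k, j < k → ∀ s ∈ D j, ∀ t ∈ D k, r s t) ∧
      ∀ n, ∑ k ∈ Finset.range n, ‖T (y k) - coordProj 𝕜 e (D k) (T (y k))‖ ≤ ε := by
  classical
  obtain ⟨q, hq, hqr⟩ := exists_seq_of_forall_nat_finset_exists
    (p := fun n (q : E × Finset ι) => (q.1 ∈ Z ∧ ‖q.1‖ = 1) ∧ ↑q.2 ⊆ A ∧
      ‖T q.1 - coordProj 𝕜 e q.2 (T q.1)‖ ≤ ε / 2 / 2 ^ n)
    (fun m n hmn q ⟨hqZ, hqA, hqn⟩ => ⟨hqZ, hqA, hqn.trans (by gcongr; norm_num)⟩)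
    (r := fun q q' => ∀ s ∈ q.2, ∀ t ∈ q'.2, r s t) fun n Q hQ => by
      have hU : ∀ s ∈ Q.biUnion Prod.snd, s ∈ A := fun s hs => by
        obtain ⟨q, hqQ, hsq⟩ := Finset.mem_biUnion.1 hs
        exact (hQ q hqQ).2.1 hsq
      obtain ⟨y, hyZ, hy, hBy⟩ := (he.isStrictlySingular_coordProj_comp_biUnion
        (Q.biUnion Prod.snd) fun s hs => hr s (hU s hs)).exists_norm_eq_one hZ
          (show 0 < ε / 2 / 2 ^ n by positivity)
      obtain ⟨D, hD, hDy⟩ := he.exists_finset_subset_diff_norm_sub_coordProj_lt (hTA y) hBy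
      refine ⟨(y, D), ⟨⟨hyZ, hy⟩, hD.trans Set.sdiff_subset, hDy.le⟩, fun q hq s hs t ht => ?_⟩
      by_contra hst
      exact (hD ht).2 (Set.mem_biUnion (Finset.mem_coe.2 (Finset.mem_biUnion.2 ⟨q, hq, hs⟩)) hst)
  refine ⟨fun k => (q k).1, fun k => (q k).2, fun k => (hq k).1, hqr,
    fun n => (Finset.sum_le_sum fun k _ => (hq k).2.2).trans ?_⟩
  exact sum_le_hasSum _ (fun k _ => by positivity) (hasSum_geometric_two' ε)

theorem exists_equiv_blockSeq_of_bounded_below (he : IsUnconditionalFamily 𝕜 e M)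
    (hr_irrefl : ∀ s, ¬ r s s) {Z : Submodule 𝕜 E} (hZ : ¬ FiniteDimensional 𝕜 Z) {δ : ℝ}
    (hδ : 0 < δ) (hTZ : ∀ z ∈ Z, δ * ‖z‖ ≤ ‖T z‖) (hTA : ∀ x, coordProj 𝕜 e A (T x) = T x)
    (hr : ∀ s ∈ A, IsStrictlySingular (coordProj 𝕜 e {t | ¬ r s t} ∘L T)) :
    ∃ (y : ℕ → E) (v : ℕ → X) (D : ℕ → Finset ι) (K : ℝ), (∀ k, ‖y k‖ = 1) ∧
      IsBlockSeq 𝕜 e r v D ∧ 0 < K ∧ IsDominatedBy 𝕜 K y v ∧ IsDominatedBy 𝕜 K v y := by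
  have hM := he.pos
  -- This ε keeps `‖v k‖ ≥ δ / 2` below, which bounds the coefficients of `v` by `2 * M / δ`, and
  -- the product of `ε` with that bound must be at most `1 / 2`.
  have hε : 0 < δ / (4 * M + 2) := by positivity
  obtain ⟨y, D, hy, hDr, hyD⟩ := he.exists_gliding_hump hZ hTA hr hε
  set v : ℕ → X := fun k => coordProj 𝕜 e (D k) (T (y k))
  have hv : IsBlockSeq 𝕜 e r v D :=
    ⟨fun k => (he.coordProj_coordProj _ _ _).trans (by rw [Set.inter_self]), hDr⟩
  have hv_ge : ∀ k, δ / 2 ≤ ‖v k‖ := fun k => by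
    have hTy : δ ≤ ‖T (y k)‖ := by simpa [(hy k).2] using hTZ _ (hy k).1
    have hdist : ‖T (y k) - v k‖ ≤ δ / (4 * M + 2) :=
      (Finset.single_le_sum (f := fun i => ‖T (y i) - v i‖) (fun i _ => norm_nonneg _)
        (Finset.self_mem_range_succ k)).trans (hyD (k + 1))
    have hε_le : δ / (4 * M + 2) ≤ δ / 2 := by gcongr; linarith
    linarith [norm_le_norm_add_norm_sub' (T (y k)) (v k)]
  obtain ⟨hvT, hTv⟩ := isDominatedBy_two_of_sum_norm_sub_le
    (show M / (δ / 2) * (δ / (4 * M + 2)) ≤ 1 / 2 by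
      rw [div_mul_div_comm, div_le_div_iff₀ (by positivity) (by positivity)]
      linarith)
    (hv.norm_coeff_le he hr_irrefl (half_pos hδ) hv_ge) hyD
  have hyv := (isDominatedBy_clm_comp_of_bounded_below hδ hTZ fun k => (hy k).1).trans
    (by positivity) hTv
  have hvy := hvT.trans zero_le_two (isDominatedBy_clm_comp T y)
  exact ⟨y, v, D, _, fun k => (hy k).2, hv, by positivity,
    hyv.mono (le_max_left (δ⁻¹ * 2) _), hvy.mono (le_max_right _ _)⟩

theorem exists_equiv_blockSeq (he : IsUnconditionalFamily 𝕜 e M) (hr_irrefl : ∀ s, ¬ r s s)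
    (hA : ¬ IsStrictlySingular (coordProj 𝕜 e A ∘L T))
    (hr : ∀ s ∈ A, IsStrictlySingular (coordProj 𝕜 e {t | ¬ r s t} ∘L T)) :
    ∃ (y : ℕ → E) (v : ℕ → X) (D : ℕ → Finset ι) (K : ℝ), (∀ k, ‖y k‖ = 1) ∧
      IsBlockSeq 𝕜 e r v D ∧ 0 < K ∧ IsDominatedBy 𝕜 K y v ∧ IsDominatedBy 𝕜 K v y := by
  obtain ⟨Z, hZ, δ, hδ, hTZ⟩ : ∃ Z : Submodule 𝕜 E, ¬ FiniteDimensional 𝕜 Z ∧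
      ∃ δ > 0, ∀ z ∈ Z, δ * ‖z‖ ≤ ‖(coordProj 𝕜 e A ∘L T) z‖ := by
    simpa only [IsStrictlySingular, not_forall, not_exists, not_and, not_lt, exists_prop] using hA
  refine he.exists_equiv_blockSeq_of_bounded_below hr_irrefl hZ hδ hTZ (A := A)
    (fun x => ?_) fun s hs => ?_
  · rw [ContinuousLinearMap.comp_apply, he.coordProj_coordProj, Set.inter_self]
  · have hrA := he.isStrictlySingular_coordProj_comp_of_subset
      (Set.inter_subset_left (t := A)) (hr s hs)
    rwa [← he.coordProj_comp_coordProj, ContinuousLinearMap.comp_assoc] at hrA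

end IsUnconditionalFamily

end BlockSequences

section Tree

theorem exists_forall_not_append_singleton {θ : Set (List ℕ)} (hθ : ¬ HasBranch θ)
    {p : List ℕ → Prop} (hp_nil : p []) (hpθ : ∀ s, p s → s ∈ θ) :
    ∃ s, p s ∧ ∀ i, ¬ p (s ++ [i]) := by
  by_contra! h
  choose! next hnext using h
  let node : ℕ → List ℕ := fun n => Nat.rec [] (fun _ s => s ++ [next s]) n
  have hnode : ∀ n, p (node n) := fun n => by
    induction n with
    | zero => exact hp_nil
    | succ n ih => exact hnext _ ih
  have hbranch : ∀ n, (List.range n).map (fun k => next (node k)) = node n := fun n => by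
    induction n with
    | zero => rfl
    | succ n ih => rw [List.range_succ, List.map_append, ih, List.map_singleton]
  exact hθ ⟨fun k => next (node k), fun n => hbranch n ▸ hpθ _ (hnode n)⟩

theorem setOf_not_lt_and_not_treeComparable_subset (σ : ℕ ≃ List ℕ) {a s : List ℕ} {i : ℕ}
    (hs : a ++ [i] <+: s) :
    {t | ¬ (σ.symm s < σ.symm t ∧ ¬ TreeComparable s t)} ⊆
      ({t | σ.symm t ≤ σ.symm s} ∪ {t | t <+: s}) ∪ {t | a ++ [i] <+: t} := by
  intro t ht
  simp only [Set.mem_ofPred_eq, not_and, not_not] at ht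
  rcases le_or_gt (σ.symm t) (σ.symm s) with hle | hlt
  · exact .inl (.inl hle)
  · exact (ht hlt).elim (fun hst => .inr (hs.trans hst)) fun hts => .inl (.inr hts)

theorem finite_setOf_symm_le_union_isPrefix (σ : ℕ ≃ List ℕ) (s : List ℕ) :
    ({t | σ.symm t ≤ σ.symm s} ∪ {t | t <+: s}).Finite := by
  refine ((Set.finite_Iic (σ.symm s)).preimage σ.symm.injective.injOn).union ?_
  simpa only [List.mem_inits] using s.inits.finite_toSet

theorem exists_append_singleton_isPrefix {a s : List ℕ} (has : a <+: s) (hne : s ≠ a) :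
    ∃ i, a ++ [i] <+: s := by
  obtain ⟨_ | ⟨i, l⟩, rfl⟩ := has
  · simp at hne
  · exact ⟨i, l, by simp⟩

namespace IsUnconditionalFamily

variable {𝕜 E X : Type*} [RCLike 𝕜] [NormedAddCommGroup E] [NormedSpace 𝕜 E]
  [NormedAddCommGroup X] [NormedSpace 𝕜 X] [CompleteSpace X] {e : List ℕ → X} {M : ℝ}
  {T : E →L[𝕜] X} {θ : Set (List ℕ)}

theorem exists_minimal_not_isStrictlySingular (he : IsUnconditionalFamily 𝕜 e M) (hθ : IsTree θ)
    (hWF : ¬ HasBranch θ) (heθ : ∀ s ∉ θ, e s = 0) (hT : ¬ IsStrictlySingular T) :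
    ∃ a, ¬ IsStrictlySingular (coordProj 𝕜 e {t | a <+: t} ∘L T) ∧
      ∀ i, IsStrictlySingular (coordProj 𝕜 e {t | a ++ [i] <+: t} ∘L T) := by
  have hroot : ¬ IsStrictlySingular (coordProj 𝕜 e {t | [] <+: t} ∘L T) := by
    simpa only [List.nil_prefix, Set.ofPred_true, he.coordProj_univ,
      ContinuousLinearMap.id_comp] using hT
  have hmem : ∀ s, ¬ IsStrictlySingular (coordProj 𝕜 e {t | s <+: t} ∘L T) → s ∈ θ :=
      fun s hs => by
    by_contra hsθ
    have hvanish : ∀ t ∈ {t | s <+: t}, e t = 0 := fun t hst =>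
      heθ t fun htθ => hsθ (hθ t htθ s hst)
    refine hs ?_
    rw [he.coordProj_eq_zero hvanish, ContinuousLinearMap.zero_comp]
    exact isStrictlySingular_zero
  obtain ⟨a, ha, hchild⟩ := exists_forall_not_append_singleton hWF
    (p := fun s => ¬ IsStrictlySingular (coordProj 𝕜 e {t | s <+: t} ∘L T)) hroot hmem
  exact ⟨a, ha, fun i => not_not.1 (hchild i)⟩

theorem exists_equiv_incomparable_blockSeq (he : IsUnconditionalFamily 𝕜 e M) (hθ : IsTree θ)
    (hWF : ¬ HasBranch θ) (heθ : ∀ s ∉ θ, e s = 0) (σ : ℕ ≃ List ℕ)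
    (hT : ¬ IsStrictlySingular T) :
    ∃ (y : ℕ → E) (v : ℕ → X) (D : ℕ → Finset (List ℕ)) (K : ℝ), (∀ k, ‖y k‖ = 1) ∧
      IsBlockSeq 𝕜 e (fun s t => σ.symm s < σ.symm t ∧ ¬ TreeComparable s t) v D ∧
      0 < K ∧ IsDominatedBy 𝕜 K y v ∧ IsDominatedBy 𝕜 K v y := by
  obtain ⟨a, ha, hchild⟩ := he.exists_minimal_not_isStrictlySingular hθ hWF heθ hT
  refine he.exists_equiv_blockSeq (fun s hs => hs.1.false) (T := T) (A := {t | a <+: t ∧ t ≠ a})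
    (fun hA => ha ?_) fun s ⟨has, hsa⟩ => ?_
  · refine he.isStrictlySingular_coordProj_comp_of_subset (fun t ht => ?_)
      (he.isStrictlySingular_coordProj_comp_union
        (he.isStrictlySingular_coordProj_comp_of_finite T (Set.finite_singleton a)) hA)
    exact (eq_or_ne t a).imp id fun hta => ⟨ht, hta⟩
  · obtain ⟨i, hi⟩ := exists_append_singleton_isPrefix has hsa
    exact he.isStrictlySingular_coordProj_comp_of_subset
      (setOf_not_lt_and_not_treeComparable_subset σ hi)
      (he.isStrictlySingular_coordProj_comp_union
        (he.isStrictlySingular_coordProj_comp_of_finite T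
          (finite_setOf_symm_le_union_isPrefix σ s)) (hchild i))

end IsUnconditionalFamily

end Tree

section ExtensionByZero

theorem linearCombination_indicator {R V ι : Type*} [Semiring R] [AddCommMonoid V] [Module R V]
    (A : Set ι) [DecidablePred (· ∈ A)] (e : ι → V) (z : ι →₀ R) :
    Finsupp.linearCombination R (A.indicator e) z =
      Finsupp.linearCombination R e (z.filter (· ∈ A)) := by
  simp only [Finsupp.linearCombination_apply, Finsupp.sum, Finset.sum_filter,
    Finsupp.support_filter]
  exact Finset.sum_congr rfl fun s _ => by by_cases hs : s ∈ A <;> simp [hs]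

variable {𝕜 ι X : Type*} [NontriviallyNormedField 𝕜] [NormedAddCommGroup X] [NormedSpace 𝕜 X]
  {e : ι → X} {θ : Set ι} {M : ℝ}

theorem isUnconditionalFamily_indicator [DecidableEq ι] (hM : 0 < M)
    (hdense : DenseRange fun z : {z : ι →₀ 𝕜 // ↑z.support ⊆ θ} =>
      ∑ s ∈ (z : ι →₀ 𝕜).support, (z : ι →₀ 𝕜) s • e s)
    (huncond : ∀ z : ι →₀ 𝕜, ↑z.support ⊆ θ → ∀ F : Finset ι,
      ‖∑ s ∈ z.support ∩ F, z s • e s‖ ≤ M * ‖∑ s ∈ z.support, z s • e s‖) :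
    IsUnconditionalFamily 𝕜 (θ.indicator e) M where
  pos := hM
  dense_span := by
    refine Dense.mono ?_ hdense
    rintro _ ⟨⟨z, hz⟩, rfl⟩
    refine Submodule.sum_mem _ fun s hs => Submodule.smul_mem _ _ (Submodule.subset_span ⟨s, ?_⟩)
    exact Set.indicator_of_mem (hz hs) e
  norm_indicator_le A z := by
    classical
    set z' := z.filter (· ∈ θ) with hz'
    have hz'θ : ↑z'.support ⊆ θ := by simp [hz', Set.subset_def]
    have hsum : Finsupp.linearCombination 𝕜 (A.indicator (θ.indicator e)) z =
        ∑ s ∈ z'.support ∩ z'.support.filter (· ∈ A), z' s • e s := by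
      rw [Set.indicator_indicator, Set.inter_comm, ← Set.indicator_indicator,
        linearCombination_indicator, Finsupp.linearCombination_apply, Finsupp.sum,
        Finset.inter_eq_right.2 (Finset.filter_subset _ _), Finset.sum_filter]
      exact Finset.sum_congr rfl fun s _ => by by_cases hs : s ∈ A <;> simp [hs, hz']
    rw [hsum, linearCombination_indicator]
    exact huncond z' hz'θ _

theorem IsUnconditionalFamily.exists_finsupp_sum_eq [CompleteSpace 𝕜] [CompleteSpace X]
    (he : IsUnconditionalFamily 𝕜 (θ.indicator e) M) {D : Finset ι} {v : X}
    (hv : coordProj 𝕜 (θ.indicator e) D v = v) :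
    ∃ x : ι →₀ 𝕜, ↑x.support ⊆ θ ∧ x.support ⊆ D ∧ ∑ s ∈ x.support, x s • e s = v := by
  have hspan : Submodule.span 𝕜 (θ.indicator e '' D) ≤ Submodule.span 𝕜 (e '' (D ∩ θ)) := by
    rw [Submodule.span_le]
    rintro _ ⟨s, hsD, rfl⟩
    by_cases hs : s ∈ θ
    · simpa [hs] using Submodule.subset_span (Set.mem_image_of_mem e (Set.mem_inter hsD hs))
    · simp [hs]
  obtain ⟨x, hx, hxv⟩ := (Finsupp.mem_span_image_iff_linearCombination 𝕜).1
    (hspan (he.coordProj_apply_mem_span D.finite_toSet v))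
  have hsupp := (Finsupp.mem_supported 𝕜 x).1 hx
  exact ⟨x, fun s hs => (hsupp hs).2, fun s hs => (hsupp hs).1, hxv.trans hv⟩

end ExtensionByZero

theorem subspace_contains_seq_equiv_incomparable_block_general
    {X : Type*} [NormedAddCommGroup X] [NormedSpace ℝ X] [CompleteSpace X]
    (θ : Set (List ℕ)) (hθ : IsTree θ) (hWF : ¬ HasBranch θ) (σ : ℕ ≃ List ℕ) (e : List ℕ → X)
    (hdense : DenseRange fun z : {z : List ℕ →₀ ℝ // ↑z.support ⊆ θ} =>
      ∑ s ∈ (z : List ℕ →₀ ℝ).support, (z : List ℕ →₀ ℝ) s • e s)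
    (huncond : ∃ M : ℝ, 0 < M ∧ ∀ z : List ℕ →₀ ℝ, ↑z.support ⊆ θ →
      ∀ F : Finset (List ℕ),
        ‖∑ s ∈ z.support ∩ F, z s • e s‖ ≤ M * ‖∑ s ∈ z.support, z s • e s‖)
    (Y : Submodule ℝ X) (hYinf : ¬ FiniteDimensional ℝ Y) :
    ∃ (y : ℕ → X) (x : ℕ → (List ℕ →₀ ℝ)),
      (∀ k, y k ∈ Y) ∧ IsBasicSeq y ∧
      (∀ k, ↑(x k).support ⊆ θ) ∧
      (∀ k, ∀ s ∈ (x k).support, ∀ t ∈ (x (k + 1)).support, σ.symm s < σ.symm t) ∧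
      (∀ k l, k ≠ l → CompIncomp ↑(x k).support ↑(x l).support) ∧
      (∃ a b : ℝ, 0 < a ∧ ∀ k,
        a ≤ ‖∑ s ∈ (x k).support, x k s • e s‖ ∧ ‖∑ s ∈ (x k).support, x k s • e s‖ ≤ b) ∧
      (∃ C : ℝ, 1 ≤ C ∧ ∀ (n : ℕ) (c : ℕ → ℝ),
        C⁻¹ * ‖∑ k ∈ Finset.range n, c k • ∑ s ∈ (x k).support, x k s • e s‖ ≤
            ‖∑ k ∈ Finset.range n, c k • y k‖ ∧
        ‖∑ k ∈ Finset.range n, c k • y k‖ ≤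
            C * ‖∑ k ∈ Finset.range n, c k • ∑ s ∈ (x k).support, x k s • e s‖) := by
  obtain ⟨M, hM, hM_uncond⟩ := huncond
  have he := isUnconditionalFamily_indicator hM hdense hM_uncond
  have hincl : ¬ IsStrictlySingular Y.subtypeL :=
    not_isStrictlySingular_of_bounded_below hYinf one_pos fun y => (one_mul ‖y‖).le
  obtain ⟨y, v, D, K, hy, hv, hK, hyv, hvy⟩ := he.exists_equiv_incomparable_blockSeq hθ hWF
    (fun s hs => Set.indicator_of_notMem hs e) σ hincl
  replace hyv : IsDominatedBy ℝ K (fun k => (y k : X)) v := fun n c => by simpa using hyv n c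
  replace hvy : IsDominatedBy ℝ K v (fun k => (y k : X)) := fun n c => by simpa using hvy n c
  have hv_bdd : ∀ k, K⁻¹ ≤ ‖v k‖ ∧ ‖v k‖ ≤ K := fun k => hyv.inv_le_norm_and_norm_le hvy hK (hy k)
  have hv_basic := hv.isBasicSeq he (fun s hs => hs.1.false) fun k =>
    norm_pos_iff.1 ((inv_pos.2 hK).trans_le (hv_bdd k).1)
  choose x hxθ hxD hxv using fun k => he.exists_finsupp_sum_eq (hv.coordProj_eq k)
  have hrel : ∀ j k, j < k → ∀ s ∈ (x j).support, ∀ t ∈ (x k).support,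
      σ.symm s < σ.symm t ∧ ¬ TreeComparable s t := fun j k hjk s hs t ht =>
    hv.rel j k hjk s (hxD j hs) t (hxD k ht)
  refine ⟨fun k => y k, x, ?_⟩
  simp only [hxv]
  refine ⟨fun k => (y k).2, hv_basic.of_isDominatedBy hK hyv hvy, hxθ,
    fun k s hs t ht => (hrel k (k + 1) k.lt_succ_self s hs t ht).1, fun k l hkl s hs t ht => ?_,
    ⟨K⁻¹, K, inv_pos.2 hK, hv_bdd⟩,
    ⟨max 1 K, le_max_left 1 K, fun n c => ⟨?_, hyv.mono (le_max_right 1 K) n c⟩⟩⟩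
  · rcases hkl.lt_or_gt with hlt | hgt
    · exact (hrel k l hlt s hs t ht).2
    · exact fun hst => (hrel l k hgt t ht s hs).2 hst.symm
  · rw [inv_mul_le_iff₀ (by positivity)]
    exact hvy.mono (le_max_right 1 K) n c

/-- if `θ` is a well-founded tree, `X` a Banach space with an unconditional
basis `(e_s)_{s∈θ}` indexed by `θ` (with respect to a fixed compatible enumeration), and
`Y ⊆ X` an infinite-dimensional closed subspace, then `Y` contains a basic sequence `(y_k)`
equivalent to a semi-normalized block sequence `(x_k)` of `(e_s)` whose supports are pairwise
completely incomparable subsets of `θ`. -/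
theorem subspace_contains_seq_equiv_incomparable_block
    {X : Type*} [NormedAddCommGroup X] [NormedSpace ℝ X] [CompleteSpace X]
    (θ : Set (List ℕ)) (hθ : IsTree θ) (hWF : ¬ HasBranch θ)
    (σ : ℕ ≃ List ℕ) (hσ : CompatibleEnum σ)
    (e : List ℕ → X) (he0 : ∀ s ∈ θ, e s ≠ 0)
    (hdense : DenseRange fun z : {z : List ℕ →₀ ℝ // ↑z.support ⊆ θ} =>
      ∑ s ∈ (z : List ℕ →₀ ℝ).support, (z : List ℕ →₀ ℝ) s • e s)
    (huncond : ∃ M : ℝ, 0 < M ∧ ∀ z : List ℕ →₀ ℝ, ↑z.support ⊆ θ →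
      ∀ F : Finset (List ℕ),
        ‖∑ s ∈ z.support ∩ F, z s • e s‖ ≤ M * ‖∑ s ∈ z.support, z s • e s‖)
    (Y : Submodule ℝ X) (hYc : IsClosed (Y : Set X)) (hYinf : ¬ FiniteDimensional ℝ Y) :
    ∃ (y : ℕ → X) (x : ℕ → (List ℕ →₀ ℝ)),
      (∀ k, y k ∈ Y) ∧ IsBasicSeq y ∧
      (∀ k, ↑(x k).support ⊆ θ) ∧
      (∀ k, ∀ s ∈ (x k).support, ∀ t ∈ (x (k + 1)).support, σ.symm s < σ.symm t) ∧
      (∀ k l, k ≠ l → CompIncomp ↑(x k).support ↑(x l).support) ∧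
      (∃ a b : ℝ, 0 < a ∧ ∀ k,
        a ≤ ‖∑ s ∈ (x k).support, x k s • e s‖ ∧ ‖∑ s ∈ (x k).support, x k s • e s‖ ≤ b) ∧
      (∃ C : ℝ, 1 ≤ C ∧ ∀ (n : ℕ) (c : ℕ → ℝ),
        C⁻¹ * ‖∑ k ∈ Finset.range n, c k • ∑ s ∈ (x k).support, x k s • e s‖ ≤
            ‖∑ k ∈ Finset.range n, c k • y k‖ ∧
        ‖∑ k ∈ Finset.range n, c k • y k‖ ≤
            C * ‖∑ k ∈ Finset.range n, c k • ∑ s ∈ (x k).support, x k s • e s‖) :=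
  subspace_contains_seq_equiv_incomparable_block_general θ hθ hWF σ e hdense huncond Y hYinf
end

section
/- Let X be a Banach space with an unconditional basis (xₖ) that is strongly asymptotic ℓ¹, and suppose X is crudely finitely representable in ℓ¹. Then X contains an isomorphic copy of ℓ¹. Consequently, no subspace of Tsirelson space generated by a subsequence of its standard basis embeds uniformly into all of its own tail subspaces. -/
/-- `Z` `K`-embeds into `W`. -/
def Embeds (K : ℝ) (Z W : Type*) [NormedAddCommGroup Z] [NormedSpace ℝ Z]
    [NormedAddCommGroup W] [NormedSpace ℝ W] : Prop :=
  ∃ T : Z →L[ℝ] W, ∀ z : Z, ‖z‖ ≤ ‖T z‖ ∧ ‖T z‖ ≤ K * ‖z‖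

/-- The basis `(xₖ)` of `X` is unconditional (suppression unconditional with constant `M`). -/
def IsUncondBasis {X : Type*} [NormedAddCommGroup X] [NormedSpace ℝ X] (x : ℕ → X) : Prop :=
  ∃ M : ℝ, 1 ≤ M ∧ ∀ (a : ℕ →₀ ℝ) (F : Finset ℕ),
    ‖∑ k ∈ a.support ∩ F, a k • x k‖ ≤ M * ‖∑ k ∈ a.support, a k • x k‖

/-- The basis `(xₖ)` is strongly asymptotic `ℓ¹` : there are `f : ℕ → ℕ` and `C > 0` such
that any `m` disjointly supported unit vectors in `span{xₖ : k ≥ f(m)}` are `C`-equivalent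
to the unit vector basis of `ℓ¹ₘ`. -/
def StronglyAsymptoticL1 {X : Type*} [NormedAddCommGroup X] [NormedSpace ℝ X]
    (x : ℕ → X) : Prop :=
  ∃ (f : ℕ → ℕ) (C : ℝ), 1 ≤ C ∧ ∀ (m : ℕ) (v : Fin m → X) (S : Fin m → Finset ℕ),
    (∀ i, ‖v i‖ = 1) → (∀ i, v i ∈ Submodule.span ℝ (x '' ↑(S i))) →
    (∀ i, ∀ k ∈ S i, f m ≤ k) → (∀ i j : Fin m, i ≠ j → Disjoint (S i) (S j)) →
    ∀ a : Fin m → ℝ,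
      C⁻¹ * ∑ i, |a i| ≤ ‖∑ i, a i • v i‖ ∧ ‖∑ i, a i • v i‖ ≤ C * ∑ i, |a i|

/-- `X` contains an isomorphic copy of `ℓ¹`. -/
def ContainsL1 (X : Type*) [NormedAddCommGroup X] [NormedSpace ℝ X] : Prop :=
  ∃ T : lp (fun _ : ℕ => ℝ) 1 →L[ℝ] X, ∃ c : ℝ, 0 < c ∧
    ∀ a : lp (fun _ : ℕ => ℝ) 1, c * ‖a‖ ≤ ‖T a‖

/-- `X` is crudely finitely representable in `ℓ¹`. -/
def CrudelyFinRepL1 (X : Type*) [NormedAddCommGroup X] [NormedSpace ℝ X] : Prop :=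
  ∃ M : ℝ, 0 < M ∧ ∀ F : Submodule ℝ X, FiniteDimensional ℝ F →
    Embeds M ↥F (lp (fun _ : ℕ => ℝ) 1)

/-!
A sequence that is crudely finitely representable in `ℓ¹` is equivalent to a sequence `f` in
`L¹(μ)` for a finite measure `μ`: spread over the compact cube of coordinate vectors, the finite
sections become measures of bounded mass, and `μ` is a weak limit of them. Far out, asymptotic
`ℓ¹`-ness makes the average of `‖∑ ± f i‖` over `m` vectors at least `c * m`, whereas for a
uniformly integrable sequence, truncation at height `K` bounds it by `η * m + √m * K`. Hence a
subsequence of `f` carries a fixed amount of mass on disjoint sets, so its averages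
over signs dominate `∑ |a k|`, and unconditionality removes the signs.

If `X` embeds uniformly into its tail subspaces, then the normalized basis is finitely
representable in `ℓ¹`: a finite family of vectors in a far tail is, up to a small error, in the span
of boundedly many disjoint blocks, obtained by grouping the basis vectors whose coefficients in
the family have nearly the same direction, and these blocks are equivalent to the `ℓ¹` basis.
-/

section Equivalence

open Finset

variable {ι κ E F G : Type*} [NormedAddCommGroup E] [NormedSpace ℝ E]
  [NormedAddCommGroup F] [NormedSpace ℝ F] [NormedAddCommGroup G] [NormedSpace ℝ G]

/-- The families `y` and `z` are `M`-equivalent along `s`: the linear map sending `y i` to `z i`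
does not decrease norms, and increases them at most by the factor `M`. -/
def IsEquivalentOn (M : ℝ) (s : Finset ι) (y : ι → E) (z : ι → F) : Prop :=
  ∀ a : ι → ℝ, ‖∑ i ∈ s, a i • y i‖ ≤ ‖∑ i ∈ s, a i • z i‖ ∧
    ‖∑ i ∈ s, a i • z i‖ ≤ M * ‖∑ i ∈ s, a i • y i‖

namespace IsEquivalentOn

variable {M N : ℝ} {s t : Finset ι} {y : ι → E} {z : ι → F} {w : ι → G}

theorem mono (h : IsEquivalentOn M t y z) (hst : s ⊆ t) : IsEquivalentOn M s y z := by
  classical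
  intro a
  simpa only [ite_smul, zero_smul, sum_ite_mem, inter_eq_right.mpr hst]
    using h fun i => if i ∈ s then a i else 0

theorem comp {φ : κ ↪ ι} {s : Finset κ} (h : IsEquivalentOn M (s.map φ) y z) :
    IsEquivalentOn M s (fun k => y (φ k)) (fun k => z (φ k)) := by
  intro a
  simpa only [sum_map, φ.injective.extend_apply] using h (Function.extend φ a 0)

theorem trans (hN : 0 ≤ N) (h : IsEquivalentOn M s y z) (h' : IsEquivalentOn N s z w) :
    IsEquivalentOn (N * M) s y w := fun a =>
  ⟨(h a).1.trans (h' a).1, (h' a).2.trans <| by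
    rw [mul_assoc]; exact mul_le_mul_of_nonneg_left (h a).2 hN⟩

theorem norm_le (h : IsEquivalentOn M s y z) {i : ι} (hi : i ∈ s) :
    ‖y i‖ ≤ ‖z i‖ ∧ ‖z i‖ ≤ M * ‖y i‖ := by
  classical
  simpa only [ite_smul, one_smul, zero_smul, sum_ite_eq', if_pos hi]
    using h fun j => if j = i then 1 else 0

end IsEquivalentOn

/-- The family `y` is unconditional with constant `U`: decreasing the absolute values of the
coefficients of a finite linear combination, and changing their signs, multiplies its norm by at
most `U`. -/
def IsUnconditionalWith (U : ℝ) (y : ι → E) : Prop :=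
  ∀ (s : Finset ι) (a b : ι → ℝ), (∀ k ∈ s, |b k| ≤ |a k|) →
    ‖∑ k ∈ s, b k • y k‖ ≤ U * ‖∑ k ∈ s, a k • y k‖

namespace IsUnconditionalWith

variable {U : ℝ} {y : ι → E}

theorem smul (h : IsUnconditionalWith U y) (r : ι → ℝ) :
    IsUnconditionalWith U fun k => r k • y k := by
  intro s a b hab
  simp only [smul_smul]
  refine h s (fun k => a k * r k) (fun k => b k * r k) fun k hk => ?_
  simpa only [abs_mul] using mul_le_mul_of_nonneg_right (hab k hk) (abs_nonneg _)

theorem comp (h : IsUnconditionalWith U y) (φ : κ ↪ ι) :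
    IsUnconditionalWith U fun k => y (φ k) := by
  intro s a b hab
  simpa only [sum_map, φ.injective.extend_apply] using
    h (s.map φ) (Function.extend φ a 0) (Function.extend φ b 0)
      (by simpa only [forall_mem_map, φ.injective.extend_apply] using hab)

theorem abs_mul_norm_le (h : IsUnconditionalWith U y) {s : Finset ι} {i : ι} (hi : i ∈ s)
    (a : ι → ℝ) : |a i| * ‖y i‖ ≤ U * ‖∑ k ∈ s, a k • y k‖ := by
  classical
  have hsingle := h s a (fun k => if k = i then a k else 0) fun k _ => by
    split_ifs
    · rfl
    · simp only [abs_zero, abs_nonneg]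
  simpa only [ite_smul, zero_smul, sum_ite_eq', if_pos hi, norm_smul, Real.norm_eq_abs]
    using hsingle

theorem sum_abs_le (h : IsUnconditionalWith U y) {s : Finset ι} (hy : ∀ i ∈ s, ‖y i‖ = 1)
    (a : ι → ℝ) : ∑ i ∈ s, |a i| ≤ #s * U * ‖∑ k ∈ s, a k • y k‖ := by
  rw [mul_assoc, ← nsmul_eq_mul]
  refine sum_le_card_nsmul _ _ _ fun i hi => ?_
  simpa only [hy i hi, mul_one] using h.abs_mul_norm_le hi a

/-- A norming functional `φ` turns the claim into a bound for `∑ |a k * φ (y k)|`, whose positive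
and negative parts are values of `φ` at suppressions of `∑ a k • y k`. -/
theorem of_norm_sum_subset_le {M : ℝ}
    (h : ∀ (s t : Finset ι) (a : ι → ℝ), t ⊆ s →
      ‖∑ k ∈ t, a k • y k‖ ≤ M * ‖∑ k ∈ s, a k • y k‖) :
    IsUnconditionalWith (2 * M) y := by
  classical
  intro s a b hab
  obtain ⟨φ, hφ_norm, hφ⟩ := exists_dual_vector'' ℝ (∑ k ∈ s, b k • y k)
  have abs_φ_le : ∀ t ⊆ s, |∑ k ∈ t, a k * φ (y k)| ≤ M * ‖∑ k ∈ s, a k • y k‖ := fun t ht =>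
    calc |∑ k ∈ t, a k * φ (y k)| = ‖φ (∑ k ∈ t, a k • y k)‖ := by
          simp only [map_sum, map_smul, smul_eq_mul, Real.norm_eq_abs]
      _ ≤ ‖∑ k ∈ t, a k • y k‖ := φ.le_of_opNorm_le hφ_norm _ |>.trans_eq (one_mul _)
      _ ≤ M * ‖∑ k ∈ s, a k • y k‖ := h s t a ht
  calc ‖∑ k ∈ s, b k • y k‖ = ∑ k ∈ s, b k * φ (y k) := by
        simpa only [map_sum, map_smul, smul_eq_mul, RCLike.ofReal_real_eq_id, id_eq] using hφ.symm
    _ ≤ ∑ k ∈ s, |a k * φ (y k)| := sum_le_sum fun k hk => (le_abs_self _).trans <| by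
        simpa only [abs_mul] using mul_le_mul_of_nonneg_right (hab k hk) (abs_nonneg _)
    _ = |∑ k ∈ s with 0 ≤ a k * φ (y k), a k * φ (y k)| +
        |∑ k ∈ s with ¬0 ≤ a k * φ (y k), a k * φ (y k)| := by
        rw [← sum_filter_add_sum_filter_not s (fun k => 0 ≤ a k * φ (y k)),
          abs_sum_of_nonneg fun k hk => (mem_filter.mp hk).2, ← abs_neg (∑ k ∈ s with ¬_, _),
          ← sum_neg_distrib,
          abs_sum_of_nonneg fun k hk => neg_nonneg.mpr (not_le.mp (mem_filter.mp hk).2).le]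
        exact congr_arg₂ _ (sum_congr rfl fun k hk => abs_of_nonneg (mem_filter.mp hk).2)
          (sum_congr rfl fun k hk => abs_of_neg (not_le.mp (mem_filter.mp hk).2))
    _ ≤ 2 * M * ‖∑ k ∈ s, a k • y k‖ := by
        linarith [abs_φ_le _ (filter_subset (fun k => 0 ≤ a k * φ (y k)) s),
          abs_φ_le _ (filter_subset (fun k => ¬0 ≤ a k * φ (y k)) s)]

end IsUnconditionalWith

theorem IsUncondBasis.exists_isUnconditionalWith {x : ℕ → E} (hx : IsUncondBasis x) :
    ∃ U, 1 ≤ U ∧ IsUnconditionalWith U x := by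
  obtain ⟨M, hM, h⟩ := hx
  refine ⟨2 * M, by linarith, .of_norm_sum_subset_le fun s t a hts => ?_⟩
  let a' : ℕ →₀ ℝ := Finsupp.indicator s fun k _ => a k
  have sum_a' : ∀ u ⊆ s, ∑ k ∈ a'.support ∩ u, a' k • x k = ∑ k ∈ u, a k • x k := fun u hu => by
    rw [sum_subset inter_subset_right fun k hk hk' => by
      rw [Finsupp.notMem_support_iff.mp fun ha => hk' (mem_inter.mpr ⟨ha, hk⟩), zero_smul]]
    exact sum_congr rfl fun k hk => by rw [Finsupp.indicator_of_mem (hu hk)]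
  have sum_a'_support : ∑ k ∈ a'.support, a' k • x k = ∑ k ∈ s, a k • x k := by
    rw [← sum_a' s Subset.rfl, inter_eq_left.mpr (Finsupp.support_indicator_subset s _)]
  simpa only [sum_a' t hts, sum_a'_support] using h a' t

end Equivalence

section Rademacher

open Finset
open scoped BigOperators

variable {ι E F H : Type*} [NormedAddCommGroup E] [NormedSpace ℝ E]
  [NormedAddCommGroup F] [NormedSpace ℝ F] [NormedAddCommGroup H] [InnerProductSpace ℝ H]

open scoped Classical in
/-- The choice of signs encoded by the set `p` of the indices that get the sign `+1`. -/
noncomputable def subsetSign (p : Finset ι) (i : ι) : ℝ := if i ∈ p then 1 else -1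

/-- The average of `‖∑ i ∈ s, ± v i‖` over all choices of signs. -/
noncomputable def rademacherAverage (s : Finset ι) (v : ι → E) : ℝ :=
  𝔼 p ∈ s.powerset, ‖∑ i ∈ s, subsetSign p i • v i‖

theorem abs_subsetSign (p : Finset ι) (i : ι) : |subsetSign p i| = 1 := by
  unfold subsetSign
  split_ifs <;> simp

theorem subsetSign_mul_self (p : Finset ι) (i : ι) : subsetSign p i * subsetSign p i = 1 := by
  rw [← abs_mul_abs_self, abs_subsetSign, mul_one]

theorem sum_subsetSign_mul [DecidableEq ι] {s : Finset ι} {i : ι} (hi : i ∈ s) (j : ι) :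
    ∑ p ∈ s.powerset, subsetSign p i * subsetSign p j = if i = j then (#s.powerset : ℝ) else 0 := by
  split_ifs with hij
  · simp only [← hij, subsetSign_mul_self, sum_const, nsmul_eq_mul, mul_one]
  -- Flipping the sign of `i` is a fixed-point free involution that negates the product.
  · refine sum_involution (fun p _ => symmDiff p {i}) ?_ ?_ ?_ ?_
    · intro p _
      have flip_i : subsetSign (symmDiff p {i}) i = -subsetSign p i := by
        by_cases hp : i ∈ p <;> simp [subsetSign, mem_symmDiff, hp]
      have keep_j : subsetSign (symmDiff p {i}) j = subsetSign p j := by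
        simp [subsetSign, mem_symmDiff, Ne.symm hij]
      rw [flip_i, keep_j, neg_mul, add_neg_cancel]
    · intro p _ _ hp
      have : symmDiff p {i} = symmDiff p ∅ := hp.trans (symmDiff_bot p).symm
      exact singleton_ne_empty i (symmDiff_right_injective p this)
    · intro p hp
      rw [mem_powerset] at hp ⊢
      exact symmDiff_subset_union.trans (union_subset hp (singleton_subset_iff.mpr hi))
    · intro p _
      exact symmDiff_symmDiff_cancel_right _ _

theorem rademacherAverage_nonneg (s : Finset ι) (v : ι → E) : 0 ≤ rademacherAverage s v :=
  expect_nonneg fun _ _ => norm_nonneg _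

theorem norm_le_rademacherAverage {s : Finset ι} {k : ι} (hk : k ∈ s) (v : ι → E) :
    ‖v k‖ ≤ rademacherAverage s v := by
  classical
  have card_smul_v : (#s.powerset : ℝ) • v k =
      ∑ p ∈ s.powerset, subsetSign p k • ∑ i ∈ s, subsetSign p i • v i := by
    simp_rw [smul_sum, smul_smul]
    rw [sum_comm]
    simp_rw [← sum_smul, sum_subsetSign_mul hk]
    simp only [ite_smul, zero_smul, sum_ite_eq, if_pos hk]
  rw [rademacherAverage, expect_eq_sum_div_card,
    le_div_iff₀' (Nat.cast_pos.mpr (powerset_nonempty s).card_pos)]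
  calc #s.powerset * ‖v k‖ = ‖(#s.powerset : ℝ) • v k‖ := by
        rw [norm_smul, RCLike.norm_natCast]
    _ ≤ ∑ p ∈ s.powerset, ‖subsetSign p k • ∑ i ∈ s, subsetSign p i • v i‖ := by
        rw [card_smul_v]; exact norm_sum_le _ _
    _ = ∑ p ∈ s.powerset, ‖∑ i ∈ s, subsetSign p i • v i‖ := by
        simp only [norm_smul, Real.norm_eq_abs, abs_subsetSign, one_mul]

theorem rademacherAverage_add_le (s : Finset ι) (v w : ι → E) :
    rademacherAverage s (v + w) ≤ rademacherAverage s v + rademacherAverage s w := by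
  rw [rademacherAverage, rademacherAverage, rademacherAverage, ← expect_add_distrib]
  refine expect_le_expect fun p _ => ?_
  simp only [Pi.add_apply, smul_add, sum_add_distrib]
  exact norm_add_le _ _

theorem rademacherAverage_le_sum_norm (s : Finset ι) (v : ι → E) :
    rademacherAverage s v ≤ ∑ i ∈ s, ‖v i‖ :=
  expect_le (powerset_nonempty s) fun p _ => (norm_sum_le _ _).trans_eq <| by
    simp only [norm_smul, Real.norm_eq_abs, abs_subsetSign, one_mul]

theorem expect_norm_sum_subsetSign_smul_sq (s : Finset ι) (v : ι → H) :
    𝔼 p ∈ s.powerset, ‖∑ i ∈ s, subsetSign p i • v i‖ ^ 2 = ∑ i ∈ s, ‖v i‖ ^ 2 := by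
  classical
  rw [expect_eq_sum_div_card,
    div_eq_iff (Nat.cast_ne_zero.mpr (powerset_nonempty s).card_ne_zero), sum_mul]
  simp_rw [← real_inner_self_eq_norm_sq, sum_inner, inner_sum, real_inner_smul_left,
    real_inner_smul_right, ← mul_assoc]
  rw [sum_comm]
  refine sum_congr rfl fun i hi => ?_
  rw [sum_comm]
  simp_rw [← sum_mul, sum_subsetSign_mul hi]
  simp only [ite_mul, zero_mul, sum_ite_eq, if_pos hi]
  exact mul_comm _ _

theorem rademacherAverage_le_sqrt (s : Finset ι) (v : ι → H) :
    rademacherAverage s v ≤ √(∑ i ∈ s, ‖v i‖ ^ 2) := by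
  refine Real.le_sqrt_of_sq_le ?_
  have h := expect_mul_sq_le_sq_mul_sq s.powerset
    (fun p => ‖∑ i ∈ s, subsetSign p i • v i‖) fun _ => 1
  simpa only [mul_one, one_pow, expect_const (powerset_nonempty s),
    expect_norm_sum_subsetSign_smul_sq, rademacherAverage] using h

theorem rademacherAverage_le_sqrt_card_mul {s : Finset ι} {v : ι → H} {K : ℝ} (hK : 0 ≤ K)
    (hv : ∀ i ∈ s, ‖v i‖ ≤ K) : rademacherAverage s v ≤ √(#s) * K := by
  refine (rademacherAverage_le_sqrt s v).trans (Real.sqrt_le_iff.mpr ⟨by positivity, ?_⟩)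
  rw [mul_pow, Real.sq_sqrt (Nat.cast_nonneg _), ← nsmul_eq_mul]
  exact sum_le_card_nsmul _ _ _ fun i hi => pow_le_pow_left₀ (norm_nonneg _) (hv i hi) 2

namespace IsUnconditionalWith

variable {U : ℝ} {y : ι → E}

theorem rademacherAverage_le (h : IsUnconditionalWith U y) (s : Finset ι) (a : ι → ℝ) :
    rademacherAverage s (fun i => a i • y i) ≤ U * ‖∑ i ∈ s, a i • y i‖ := by
  refine expect_le (powerset_nonempty s) fun p _ => ?_
  simp only [smul_smul]
  exact h s a _ fun i _ => by rw [abs_mul, abs_subsetSign, one_mul]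

theorem norm_sum_le_rademacherAverage (h : IsUnconditionalWith U y) (s : Finset ι) :
    ‖∑ i ∈ s, y i‖ ≤ U * rademacherAverage s y := by
  rw [rademacherAverage, mul_expect]
  refine le_expect (powerset_nonempty s) fun p _ => ?_
  simpa only [one_smul] using h s (subsetSign p) (fun _ => 1) fun i _ => by
    rw [abs_subsetSign, abs_one]

end IsUnconditionalWith

namespace IsEquivalentOn

variable {M : ℝ} {s : Finset ι} {y : ι → E} {z : ι → F}

theorem rademacherAverage_left_le (h : IsEquivalentOn M s y z) (a : ι → ℝ) :
    rademacherAverage s (fun i => a i • y i) ≤ rademacherAverage s fun i => a i • z i :=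
  expect_le_expect fun p _ => by
    simpa only [smul_smul] using (h fun i => subsetSign p i * a i).1

theorem rademacherAverage_right_le (h : IsEquivalentOn M s y z) (a : ι → ℝ) :
    rademacherAverage s (fun i => a i • z i) ≤ M * rademacherAverage s fun i => a i • y i := by
  rw [rademacherAverage, rademacherAverage, mul_expect]
  exact expect_le_expect fun p _ => by
    simpa only [smul_smul] using (h fun i => subsetSign p i * a i).2

end IsEquivalentOn

end Rademacher

section IntegrableFunctions

open Finset MeasureTheory Filter
open scoped Topology ENNReal

variable {ι Ω G E H : Type*} [MeasurableSpace Ω] {μ : Measure Ω}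
  [NormedAddCommGroup G] [NormedAddCommGroup E] [NormedSpace ℝ E] [NormedAddCommGroup H]
  [InnerProductSpace ℝ H]

theorem exists_gt_setIntegral_iUnion_le {g : Ω → ℝ} (hg : Integrable g μ) {B : ℕ → Set Ω}
    (hB : ∑' k, μ (B k) ≠ ∞) {ε : ℝ} (hε : 0 < ε) (k : ℕ) :
    ∃ m > k, ∫ ω in ⋃ j ≥ m, B j, g ω ∂μ ≤ ε := by
  have tail_measure : Tendsto (fun m => μ (⋃ j ≥ m, B j)) atTop (𝓝 0) := by
    refine tendsto_of_tendsto_of_tendsto_of_le_of_le tendsto_const_nhds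
      (ENNReal.tendsto_sum_nat_add (fun k => μ (B k)) hB) (fun _ => zero_le) fun m => ?_
    refine (measure_mono ?_).trans (measure_iUnion_le fun k => B (k + m))
    exact Set.iUnion₂_subset fun j hj => by
      simpa only [Nat.sub_add_cancel hj] using Set.subset_iUnion (fun k => B (k + m)) (j - m)
  have tail_integral := hg.tendsto_setIntegral_nhds_zero tail_measure
  exact ((eventually_gt_atTop k).and (tail_integral.eventually_le_const hε)).exists

theorem exists_strictMono_disjoint_le_setIntegral {f : ℕ → Ω → G}
    (hf : ∀ k, Integrable (f k) μ) {B : ℕ → Set Ω} (hB : ∀ k, MeasurableSet (B k))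
    (hsum : ∑' k, μ (B k) ≠ ∞) {ε : ℝ} (hε : 0 < ε) (hfB : ∀ k, ε ≤ ∫ ω in B k, ‖f k ω‖ ∂μ) :
    ∃ (φ : ℕ → ℕ) (A : ℕ → Set Ω), StrictMono φ ∧ (∀ n, MeasurableSet (A n)) ∧
      Pairwise (Function.onFun Disjoint A) ∧ ∀ n, ε / 2 ≤ ∫ ω in A n, ‖f (φ n) ω‖ ∂μ := by
  choose next lt_next hnext using fun k =>
    exists_gt_setIntegral_iUnion_le (hf k).norm hsum (half_pos hε) k
  let φ : ℕ → ℕ := fun n => next^[n] 0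
  have φ_succ : ∀ n, φ (n + 1) = next (φ n) := fun n => Function.iterate_succ_apply' next n 0
  have hφ : StrictMono φ := strictMono_nat_of_lt_succ fun n => φ_succ n ▸ lt_next (φ n)
  let C : ℕ → Set Ω := fun m => ⋃ j ≥ m, B j
  have hC : ∀ m, MeasurableSet (C m) := fun m =>
    MeasurableSet.iUnion fun j => MeasurableSet.iUnion fun _ => hB j
  refine ⟨φ, fun n => B (φ n) \ C (φ (n + 1)), hφ, fun n => (hB _).diff (hC _), ?_, fun n => ?_⟩
  · refine (pairwise_disjoint_on _).mpr fun m n hmn => ?_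
    have B_subset : B (φ n) ⊆ C (φ (m + 1)) :=
      Set.subset_biUnion_of_mem (u := B) (hφ.monotone (Nat.succ_le_of_lt hmn))
    exact Set.disjoint_left.mpr fun ω hm hn => hm.2 (B_subset hn.1)
  · have hint := (hf (φ n)).norm
    have inter_le : ∫ ω in B (φ n) ∩ C (φ (n + 1)), ‖f (φ n) ω‖ ∂μ ≤ ε / 2 :=
      (setIntegral_mono_set hint.integrableOn (ae_of_all _ fun _ => norm_nonneg _)
        Set.inter_subset_right.eventuallyLE).trans (φ_succ n ▸ hnext (φ n))
    have hsplit := integral_inter_add_sdiff (hC (φ (n + 1))) (hint.integrableOn (s := B (φ n)))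
    linarith [hfB (φ n)]

theorem tsum_measure_two_pow_lt_norm_ne_top {f : ℕ → Ω → G} (hf : ∀ k, Integrable (f k) μ)
    {M : ℝ} (hM : ∀ k, ∫ ω, ‖f k ω‖ ∂μ ≤ M) :
    ∑' k, μ {ω | 2 ^ k < ‖f k ω‖} ≠ ∞ := by
  have markov : ∀ k, μ {ω | 2 ^ k < ‖f k ω‖} ≤ ENNReal.ofReal (M * (1 / 2) ^ k) := by
    intro k
    have hle := mul_meas_ge_le_integral_of_nonneg (ae_of_all μ fun ω => norm_nonneg (f k ω))
      (hf k).norm ((2 : ℝ) ^ k)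
    have lt_subset_le : {ω | 2 ^ k < ‖f k ω‖} ⊆ {ω | 2 ^ k ≤ ‖f k ω‖} :=
      Set.ofPred_subset_ofPred.mpr fun _ => le_of_lt
    refine (measure_mono lt_subset_le).trans ?_
    rw [← ofReal_measureReal ((hf k).norm.measure_ge_lt_top (by positivity)).ne]
    refine ENNReal.ofReal_le_ofReal ?_
    rw [one_div_pow, mul_one_div, le_div_iff₀' (by positivity)]
    exact hle.trans (hM k)
  have hgeom : Summable fun k : ℕ => M * (1 / 2 : ℝ) ^ k := summable_geometric_two.mul_left M
  exact ne_top_of_le_ne_top hgeom.tsum_ofReal_ne_top (ENNReal.tsum_le_tsum markov)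

theorem integrable_rademacherAverage {f : ι → Ω → E} (hf : ∀ i, Integrable (f i) μ)
    (s : Finset ι) : Integrable (fun ω => rademacherAverage s fun i => f i ω) μ := by
  simp only [rademacherAverage, expect_eq_sum_div_card]
  exact (integrable_finsetSum _ fun p _ =>
    (integrable_finsetSum _ fun i _ => (hf i).smul _).norm).div_const _

theorem norm_sum_smul_Lp_one (s : Finset ι) (a : ι → ℝ) (f : ι → Lp E 1 μ) :
    ‖∑ i ∈ s, a i • f i‖ = ∫ ω, ‖∑ i ∈ s, a i • f i ω‖ ∂μ := by
  rw [L1.norm_eq_integral_norm]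
  refine integral_congr_ae ?_
  filter_upwards [Lp.coeFn_fun_finsetSum s fun i => a i • f i,
    (eventually_all_finset s).mpr fun i _ => Lp.coeFn_smul (a i) (f i)] with ω hsum hsmul
  rw [hsum]
  exact congr_arg norm (sum_congr rfl hsmul)

theorem rademacherAverage_Lp_one (s : Finset ι) (f : ι → Lp E 1 μ) :
    rademacherAverage s f = ∫ ω, rademacherAverage s (fun i => f i ω) ∂μ := by
  simp only [rademacherAverage, expect_eq_sum_div_card, norm_sum_smul_Lp_one]
  rw [integral_div, integral_finsetSum _ fun p _ => (integrable_finsetSum _ fun i _ =>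
    (L1.integrable_coeFn (f i)).fun_smul (subsetSign p i)).norm]

theorem sum_setIntegral_norm_le_rademacherAverage (s : Finset ι) (f : ι → Lp E 1 μ)
    {A : ι → Set Ω} (hA : ∀ i, MeasurableSet (A i)) (hdisj : Pairwise (Function.onFun Disjoint A)) :
    ∑ i ∈ s, ∫ ω in A i, ‖f i ω‖ ∂μ ≤ rademacherAverage s f := by
  have hint := integrable_rademacherAverage (fun i => L1.integrable_coeFn (f i)) s
  calc ∑ i ∈ s, ∫ ω in A i, ‖f i ω‖ ∂μ
      ≤ ∑ i ∈ s, ∫ ω in A i, rademacherAverage s (fun j => f j ω) ∂μ :=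
        sum_le_sum fun i hi => setIntegral_mono (L1.integrable_coeFn _).norm.integrableOn
          hint.integrableOn fun ω => norm_le_rademacherAverage hi fun j => f j ω
    _ = ∫ ω in ⋃ i ∈ s, A i, rademacherAverage s (fun j => f j ω) ∂μ :=
        (integral_biUnion_finset s (fun i _ => hA i) (hdisj.set_pairwise _)
          fun i _ => hint.integrableOn).symm
    _ ≤ ∫ ω, rademacherAverage s (fun j => f j ω) ∂μ :=
        setIntegral_le_integral hint (ae_of_all _ fun _ => rademacherAverage_nonneg _ _)
    _ = rademacherAverage s f := (rademacherAverage_Lp_one s f).symm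

theorem rademacherAverage_le_sqrt_add_sum_indicator {K : ℝ} (hK : 0 ≤ K) (s : Finset ι)
    (v : ι → H) : rademacherAverage s v ≤
      √(#s) * K + ∑ i ∈ s, {u : H | K < ‖u‖}.indicator norm (v i) := by
  classical
  have split :
      v = (fun i => if K < ‖v i‖ then 0 else v i) + fun i => if K < ‖v i‖ then v i else 0 := by
    funext i
    by_cases h : K < ‖v i‖ <;> simp [h]
  rw [split]
  refine (rademacherAverage_add_le _ _ _).trans (add_le_add ?_ ?_)
  · refine rademacherAverage_le_sqrt_card_mul hK fun i _ => ?_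
    split_ifs with h
    · rwa [norm_zero]
    · exact not_lt.mp h
  · refine (rademacherAverage_le_sum_norm _ _).trans_eq (sum_congr rfl fun i _ => ?_)
    by_cases h : K < ‖v i‖ <;> simp [h]

theorem rademacherAverage_Lp_one_le [IsFiniteMeasure μ] {K η : ℝ} (hK : 0 ≤ K) {s : Finset ι}
    {f : ι → Lp H 1 μ} (hf : ∀ i ∈ s, ∫ ω in {ω | K < ‖f i ω‖}, ‖f i ω‖ ∂μ ≤ η) :
    rademacherAverage s f ≤ √(#s) * K * μ.real Set.univ + #s * η := by
  have hmeas : ∀ i, MeasurableSet {ω | K < ‖f i ω‖} := fun i =>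
    measurableSet_lt measurable_const (Lp.stronglyMeasurable (f i)).norm.measurable
  have hint : ∀ i, Integrable ({ω | K < ‖f i ω‖}.indicator fun ω => ‖f i ω‖) μ := fun i =>
    (L1.integrable_coeFn (f i)).norm.indicator (hmeas i)
  calc rademacherAverage s f
      = ∫ ω, rademacherAverage s (fun i => f i ω) ∂μ := rademacherAverage_Lp_one s f
    _ ≤ ∫ ω, (√(#s) * K + ∑ i ∈ s, {ω | K < ‖f i ω‖}.indicator (fun ω => ‖f i ω‖) ω) ∂μ :=
        integral_mono (integrable_rademacherAverage (fun i => L1.integrable_coeFn (f i)) s)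
          ((integrable_const _).add (integrable_finsetSum _ fun i _ => hint i))
          fun ω => rademacherAverage_le_sqrt_add_sum_indicator hK s _
    _ = √(#s) * K * μ.real Set.univ + ∑ i ∈ s, ∫ ω in {ω | K < ‖f i ω‖}, ‖f i ω‖ ∂μ := by
        rw [integral_add (integrable_const _) (integrable_finsetSum _ fun i _ => hint i),
          integral_finsetSum _ fun i _ => hint i, integral_const, smul_eq_mul, mul_comm]
        simp only [integral_indicator (hmeas _)]
    _ ≤ √(#s) * K * μ.real Set.univ + #s * η := by
        rw [← nsmul_eq_mul (#s) η]
        gcongr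
        exact sum_le_card_nsmul _ _ _ hf

theorem frequently_le_setIntegral_norm_of_rademacherAverage [IsFiniteMeasure μ] {c K : ℝ}
    (hc : 0 < c) (hK : 0 ≤ K) {f : ℕ → Lp H 1 μ}
    (hf : ∀ m N : ℕ, ∃ s : Finset ℕ, #s = m ∧ (∀ i ∈ s, N ≤ i) ∧ c * m ≤ rademacherAverage s f) :
    ∃ᶠ i in atTop, c / 2 ≤ ∫ ω in {ω | K < ‖f i ω‖}, ‖f i ω‖ ∂μ := by
  intro hsmall
  obtain ⟨N, hN⟩ := eventually_atTop.mp hsmall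
  obtain ⟨r, hr⟩ := exists_nat_gt (2 * (K * μ.real Set.univ) / c)
  have hr_pos : (0 : ℝ) < r := lt_of_le_of_lt (by positivity) hr
  obtain ⟨s, hs_card, hs, hs_avg⟩ := hf (r ^ 2) N
  have upper := hs_avg.trans <| rademacherAverage_Lp_one_le hK fun i hi =>
    (not_le.mp (hN i (hs i hi))).le
  rw [hs_card, Nat.cast_pow, Real.sqrt_sq hr_pos.le] at upper
  rw [div_lt_iff₀ hc] at hr
  nlinarith

theorem exists_strictMono_sum_abs_le_rademacherAverage [IsFiniteMeasure μ] {c M : ℝ} (hc : 0 < c)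
    {f : ℕ → Lp H 1 μ} (hM : ∀ i, ‖f i‖ ≤ M)
    (hf : ∀ m N : ℕ, ∃ s : Finset ℕ, #s = m ∧ (∀ i ∈ s, N ≤ i) ∧ c * m ≤ rademacherAverage s f) :
    ∃ φ : ℕ → ℕ, StrictMono φ ∧ ∀ (s : Finset ℕ) (a : ℕ → ℝ),
      c / 4 * ∑ i ∈ s, |a i| ≤ rademacherAverage s fun i => a i • f (φ i) := by
  obtain ⟨ψ, hψ, peak⟩ := extraction_forall_of_frequently fun k : ℕ =>
    frequently_le_setIntegral_norm_of_rademacherAverage (K := 2 ^ k) hc (by positivity) hf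
  have hint : ∀ k, Integrable (f (ψ k)) μ := fun k => L1.integrable_coeFn _
  obtain ⟨χ, A, hχ, hA, hdisj, mass⟩ := exists_strictMono_disjoint_le_setIntegral hint
    (fun k => measurableSet_lt measurable_const (Lp.stronglyMeasurable _).norm.measurable)
    (tsum_measure_two_pow_lt_norm_ne_top hint fun k => L1.norm_eq_integral_norm (f (ψ k)) ▸ hM _)
    (half_pos hc) peak
  refine ⟨ψ ∘ χ, hψ.comp hχ, fun s a => le_trans ?_
    (sum_setIntegral_norm_le_rademacherAverage s _ hA hdisj)⟩
  rw [mul_sum]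
  refine sum_le_sum fun i _ => ?_
  have norm_smul_eq : (fun ω => ‖(a i • f (ψ (χ i)) : Lp H 1 μ) ω‖) =ᵐ[μ.restrict (A i)]
      fun ω => |a i| * ‖f (ψ (χ i)) ω‖ := by
    filter_upwards [ae_restrict_of_ae (Lp.coeFn_smul (a i) (f (ψ (χ i))))] with ω hω
    rw [hω, Pi.smul_apply, norm_smul, Real.norm_eq_abs]
  rw [Function.comp_apply, integral_congr_ae norm_smul_eq, integral_const_mul, mul_comm]
  refine mul_le_mul_of_nonneg_left (le_of_eq_of_le ?_ (mass i)) (abs_nonneg _)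
  ring

end IntegrableFunctions

section Compactness

open Finset MeasureTheory Filter
open scoped Topology NNReal

variable {κ E : Type*} [NormedAddCommGroup E] [NormedSpace ℝ E]

/-- The compact space in which the values of a sequence of functions lie once the functions have
been divided by the weighted sum `∑ i, 2⁻ⁱ |t i|` of their absolute values. -/
abbrev DyadicBox : Type := ∀ i : ℕ, Set.Icc (-2 ^ i : ℝ) (2 ^ i)

/-- The density `∑ i < n, 2⁻ⁱ |t i|` of a change of measure that makes the functions
`t 0, …, t (n - 1)` bounded. -/
noncomputable def dyadicDensity (n : ℕ) (t : ℕ → κ → ℝ) (ω : κ) : ℝ :=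
  ∑ i ∈ range n, (1 / 2) ^ i * |t i ω|

/-- The point of the box whose coordinates are the values at `ω` of the functions
`t i / dyadicDensity n t`; coordinates from `n` on carry no information, and are clipped. -/
noncomputable def dyadicBoxPoint (n : ℕ) (t : ℕ → κ → ℝ) (ω : κ) : DyadicBox := fun i =>
  Set.projIcc (-2 ^ i) (2 ^ i) (neg_le_self (by positivity)) (t i ω / dyadicDensity n t ω)

/-- The joint distribution of the functions `t i / dyadicDensity n t` under the measure with
density `dyadicDensity n t` with respect to counting measure. -/
noncomputable def dyadicBoxMeasure (n : ℕ) (t : ℕ → κ → ℝ) : Measure DyadicBox :=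
  Measure.sum fun ω => ENNReal.ofReal (dyadicDensity n t ω) • Measure.dirac (dyadicBoxPoint n t ω)

theorem dyadicDensity_nonneg (n : ℕ) (t : ℕ → κ → ℝ) (ω : κ) : 0 ≤ dyadicDensity n t ω :=
  sum_nonneg fun _ _ => by positivity

theorem abs_le_two_pow_mul_dyadicDensity {n i : ℕ} (hi : i < n) (t : ℕ → κ → ℝ) (ω : κ) :
    |t i ω| ≤ 2 ^ i * dyadicDensity n t ω := by
  rw [← div_le_iff₀' (by positivity), div_eq_inv_mul, ← one_div, ← one_div_pow]
  exact single_le_sum (f := fun j => (1 / 2) ^ j * |t j ω|) (fun _ _ => by positivity)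
    (mem_range.mpr hi)

theorem dyadicDensity_mul_dyadicBoxPoint {n i : ℕ} (hi : i < n) (t : ℕ → κ → ℝ) (ω : κ) :
    dyadicDensity n t ω * (dyadicBoxPoint n t ω i : ℝ) = t i ω := by
  have hle := abs_le_two_pow_mul_dyadicDensity hi t ω
  rcases (dyadicDensity_nonneg n t ω).eq_or_lt' with hzero | hpos
  · rw [hzero, mul_zero] at hle
    rw [hzero, zero_mul, abs_nonpos_iff.mp hle]
  · have mem_box : t i ω / dyadicDensity n t ω ∈ Set.Icc (-2 ^ i : ℝ) (2 ^ i) := by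
      rwa [Set.mem_Icc, ← abs_le, abs_div, abs_of_pos hpos, div_le_iff₀ hpos]
    rw [dyadicBoxPoint, Set.projIcc_of_mem _ mem_box, mul_div_cancel₀ _ hpos.ne']

theorem hasSum_dyadicDensity (n : ℕ) (t : ℕ → lp (fun _ : κ => ℝ) 1) :
    HasSum (dyadicDensity n fun i => t i) (∑ i ∈ range n, (1 / 2) ^ i * ‖t i‖) := by
  refine hasSum_sum fun i _ => HasSum.mul_left _ ?_
  simpa only [ENNReal.toReal_one, Real.rpow_one, Real.norm_eq_abs]
    using lp.hasSum_norm (p := 1) (by norm_num) (t i)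

theorem dyadicBoxMeasure_univ_le {n : ℕ} {t : ℕ → lp (fun _ : κ => ℝ) 1} {M : ℝ≥0}
    (ht : ∀ i < n, ‖t i‖ ≤ M) : dyadicBoxMeasure n (fun i => t i) Set.univ ≤ (2 * M : ℝ≥0) := by
  have hsum := hasSum_dyadicDensity n t
  have sum_le : ∑ i ∈ range n, (1 / 2) ^ i * ‖t i‖ ≤ 2 * (M : ℝ) :=
    calc ∑ i ∈ range n, (1 / 2) ^ i * ‖t i‖ ≤ ∑ i ∈ range n, (1 / 2) ^ i * (M : ℝ) :=
          sum_le_sum fun i hi => by gcongr; exact ht i (mem_range.mp hi)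
      _ ≤ 2 * M := by
          rw [← sum_mul]
          gcongr
          exact sum_geometric_two_le n
  simp only [dyadicBoxMeasure, Measure.sum_apply _ MeasurableSet.univ, Measure.smul_apply,
    measure_univ, smul_eq_mul, mul_one]
  rw [← ENNReal.ofReal_tsum_of_nonneg (dyadicDensity_nonneg n _) hsum.summable, hsum.tsum_eq,
    ← ENNReal.ofReal_coe_nnreal]
  exact ENNReal.ofReal_le_ofReal (by exact_mod_cast sum_le)

theorem integral_dyadicBoxMeasure (n : ℕ) (t : ℕ → κ → ℝ)
    [IsFiniteMeasure (dyadicBoxMeasure n t)] {g : DyadicBox → ℝ} (hg : Continuous g) :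
    ∫ p, g p ∂dyadicBoxMeasure n t = ∑' ω, dyadicDensity n t ω * g (dyadicBoxPoint n t ω) := by
  have hint : Integrable g (dyadicBoxMeasure n t) :=
    (BoundedContinuousFunction.mkOfCompact ⟨g, hg⟩).integrable _
  rw [dyadicBoxMeasure] at hint ⊢
  rw [integral_sum_measure hint]
  refine tsum_congr fun ω => ?_
  rw [integral_smul_measure, integral_dirac,
    ENNReal.toReal_ofReal (dyadicDensity_nonneg n t ω), smul_eq_mul]

theorem norm_lp_one_eq_tsum (u : lp (fun _ : κ => ℝ) 1) : ‖u‖ = ∑' ω, |u ω| := by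
  simpa using lp.norm_eq_tsum_rpow (p := 1) (by norm_num) u

theorem integral_abs_sum_dyadicBoxMeasure {n : ℕ} (t : ℕ → lp (fun _ : κ => ℝ) 1)
    [IsFiniteMeasure (dyadicBoxMeasure n fun i => t i)] {s : Finset ℕ} (hs : s ⊆ range n)
    (a : ℕ → ℝ) :
    ∫ p, |∑ i ∈ s, a i * (p i : ℝ)| ∂dyadicBoxMeasure n (fun i => t i) = ‖∑ i ∈ s, a i • t i‖ := by
  rw [integral_dyadicBoxMeasure n _ (by fun_prop), norm_lp_one_eq_tsum]
  refine tsum_congr fun ω => ?_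
  have mul_abs : ∀ r : ℝ, dyadicDensity n (fun i => t i) ω * |r| =
      |dyadicDensity n (fun i => t i) ω * r| := fun r => by
    rw [abs_mul, abs_of_nonneg (dyadicDensity_nonneg n _ ω)]
  rw [mul_abs, mul_sum, lp.coeFn_sum, Finset.sum_apply]
  refine congr_arg abs (sum_congr rfl fun i hi => ?_)
  rw [mul_left_comm, dyadicDensity_mul_dyadicBoxPoint (mem_range.mp (hs hi)) (fun i => t i),
    lp.coeFn_smul, Pi.smul_apply, smul_eq_mul]

theorem exists_tendsto_hyperfilter_finiteMeasure {S : Type*} [TopologicalSpace S] [T2Space S]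
    [CompactSpace S] [MeasurableSpace S] [BorelSpace S] {C : ℝ≥0} {ν : ℕ → FiniteMeasure S}
    (hν : ∀ n, (ν n).mass ≤ C) : ∃ μ, Tendsto ν (hyperfilter ℕ) (𝓝 μ) := by
  have hcompact := isCompact_setOfPred_finiteMeasure_le_of_compactSpace S C
  obtain ⟨μ, -, hμ⟩ := hcompact.ultrafilter_le_nhds' ((hyperfilter ℕ).map ν)
    (eventually_map.mpr (Eventually.of_forall hν))
  exact ⟨μ, hμ⟩

/-- The finite sections of the sequence `y` embed, with the uniform constant `M`, into spaces
`ℓ¹(κ)`. -/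
def IsFinitelyRepresentableL1 (M : ℝ) (y : ℕ → E) : Prop :=
  ∀ n, ∃ (κ : Type) (t : ℕ → lp (fun _ : κ => ℝ) 1), IsEquivalentOn M (range n) y t

theorem IsFinitelyRepresentableL1.exists_dyadicBox_measure {M : ℝ} {y : ℕ → E}
    (h : IsFinitelyRepresentableL1 M y) (hy : ∀ i, ‖y i‖ ≤ 1) :
    ∃ μ : FiniteMeasure DyadicBox, ∀ (s : Finset ℕ) (a : ℕ → ℝ),
      ‖∑ i ∈ s, a i • y i‖ ≤ ∫ p, |∑ i ∈ s, a i * (p i : ℝ)| ∂(μ : Measure DyadicBox) ∧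
        ∫ p, |∑ i ∈ s, a i * (p i : ℝ)| ∂(μ : Measure DyadicBox) ≤
          M * ‖∑ i ∈ s, a i • y i‖ := by
  choose κ t ht using h
  have mass_le : ∀ n, dyadicBoxMeasure n (fun i => t n i) Set.univ ≤ (2 * M.toNNReal : ℝ≥0) :=
    fun n => dyadicBoxMeasure_univ_le fun i hi => calc
      ‖t n i‖ ≤ M * ‖y i‖ := ((ht n).norm_le (mem_range.mpr hi)).2
      _ ≤ M.toNNReal * 1 := mul_le_mul (Real.le_coe_toNNReal M) (hy i) (norm_nonneg _) M.toNNReal.2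
      _ = M.toNNReal := mul_one _
  have : ∀ n, IsFiniteMeasure (dyadicBoxMeasure n fun i => t n i) := fun n =>
    ⟨(mass_le n).trans_lt ENNReal.coe_lt_top⟩
  let ν : ℕ → FiniteMeasure DyadicBox := fun n => ⟨dyadicBoxMeasure n fun i => t n i, this n⟩
  obtain ⟨μ, hμ⟩ := exists_tendsto_hyperfilter_finiteMeasure (ν := ν) (C := 2 * M.toNNReal) fun n =>
    ENNReal.coe_le_coe.mp ((FiniteMeasure.ennreal_mass).trans_le (mass_le n))
  refine ⟨μ, fun s a => ?_⟩
  have hcont : Continuous fun p : DyadicBox => |∑ i ∈ s, a i * (p i : ℝ)| := by fun_prop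
  have hlim := FiniteMeasure.tendsto_iff_forall_integral_tendsto.mp hμ
    (BoundedContinuousFunction.mkOfCompact ⟨_, hcont⟩)
  have hs : ∀ᶠ n in hyperfilter ℕ, s ⊆ range n := Nat.hyperfilter_le_atTop <|
    (eventually_ge_atTop (s.sup id + 1)).mono fun n hn =>
      s.subset_range_sup_succ.trans (range_subset_range.mpr hn)
  have integral_eq : ∀ n, s ⊆ range n →
      ∫ p, |∑ i ∈ s, a i * (p i : ℝ)| ∂(ν n : Measure DyadicBox) = ‖∑ i ∈ s, a i • t n i‖ :=
    fun n hn => integral_abs_sum_dyadicBoxMeasure (t n) hn a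
  exact ⟨ge_of_tendsto hlim <| hs.mono fun n hn =>
      (((ht n).mono hn) a).1.trans_eq (integral_eq n hn).symm,
    le_of_tendsto hlim <| hs.mono fun n hn => (integral_eq n hn).trans_le (((ht n).mono hn) a).2⟩

theorem IsFinitelyRepresentableL1.exists_Lp_one {M : ℝ} {y : ℕ → E}
    (h : IsFinitelyRepresentableL1 M y) (hy : ∀ i, ‖y i‖ ≤ 1) :
    ∃ (μ : FiniteMeasure DyadicBox) (f : ℕ → Lp ℝ 1 (μ : Measure DyadicBox)),
      ∀ s, IsEquivalentOn M s y f := by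
  obtain ⟨μ, hμ⟩ := h.exists_dyadicBox_measure hy
  let coordinate : ℕ → C(DyadicBox, ℝ) := fun i => ⟨fun p => p i, by fun_prop⟩
  let f : ℕ → Lp ℝ 1 (μ : Measure DyadicBox) := fun i => ContinuousMap.toLp 1 μ ℝ (coordinate i)
  refine ⟨μ, f, fun s a => ?_⟩
  have norm_sum_eq : ‖∑ i ∈ s, a i • f i‖ =
      ∫ p, |∑ i ∈ s, a i * (p i : ℝ)| ∂(μ : Measure DyadicBox) := by
    rw [norm_sum_smul_Lp_one]
    refine integral_congr_ae ?_
    filter_upwards [(eventually_all_finset s).mpr fun i _ =>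
      ContinuousMap.coeFn_toLp (p := 1) (𝕜 := ℝ) (μ : Measure DyadicBox) (coordinate i)] with p hp
    exact congr_arg norm (sum_congr rfl fun i hi => congr_arg (a i * ·) (hp i hi))
  rw [norm_sum_eq]
  exact hμ s a

end Compactness

section FiniteRepresentability

open Finset

variable {ι κ E F : Type*} [NormedAddCommGroup E] [NormedSpace ℝ E]
  [NormedAddCommGroup F] [NormedSpace ℝ F]

namespace IsEquivalentOn

variable {M : ℝ} {s : Finset ι} {y : ι → E} {z : ι → F}

theorem map_of_le_norm_le {T : E →L[ℝ] F} (hT : ∀ v, ‖v‖ ≤ ‖T v‖ ∧ ‖T v‖ ≤ M * ‖v‖)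
    (s : Finset ι) (y : ι → E) : IsEquivalentOn M s y fun i => T (y i) := fun a => by
  simpa only [map_sum, map_smul] using hT (∑ i ∈ s, a i • y i)

theorem coe_left_iff {V : Submodule ℝ E} {y : ι → V} :
    IsEquivalentOn M s (fun i => (y i : E)) z ↔ IsEquivalentOn M s y z := by
  simp only [IsEquivalentOn, Submodule.coe_norm, Submodule.coe_sum, Submodule.coe_smul]

theorem coe_right_iff {V : Submodule ℝ F} {z : ι → V} :
    IsEquivalentOn M s y (fun i => (z i : F)) ↔ IsEquivalentOn M s y z := by
  simp only [IsEquivalentOn, Submodule.coe_norm, Submodule.coe_sum, Submodule.coe_smul]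

theorem const_smul (h : IsEquivalentOn M s y z) (r : ℝ) :
    IsEquivalentOn M s (fun i => r • y i) fun i => r • z i := fun a => by
  simpa only [smul_smul, mul_comm _ r] using h fun i => r * a i

theorem sum_smul (h : IsEquivalentOn M s y z) (t : Finset κ) (b : κ → ι → ℝ) :
    IsEquivalentOn M t (fun k => ∑ i ∈ s, b k i • y i) fun k => ∑ i ∈ s, b k i • z i := by
  intro a
  simpa only [Finset.smul_sum, Finset.sum_smul, smul_smul, sum_comm (s := s) (t := t)]
    using h fun i => ∑ k ∈ t, a k * b k i

theorem perturb {w : ι → F} (h : IsEquivalentOn M s y z)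
    (hw : ∀ a : ι → ℝ, ‖∑ i ∈ s, a i • (z i - w i)‖ ≤ 2⁻¹ * ‖∑ i ∈ s, a i • y i‖) :
    IsEquivalentOn (2 * M + 1) s y fun i => (2 : ℝ) • w i := by
  intro a
  have norm_two_smul : ‖∑ i ∈ s, a i • (2 : ℝ) • w i‖ = 2 * ‖∑ i ∈ s, a i • w i‖ := by
    simp only [smul_comm (a _) (2 : ℝ), ← smul_sum, norm_smul, Real.norm_ofNat]
  have hdiff := hw a
  simp only [smul_sub, sum_sub_distrib] at hdiff
  obtain ⟨hlower, hupper⟩ := h a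
  rw [norm_two_smul]
  constructor
  · linarith [norm_le_norm_add_norm_sub' (∑ i ∈ s, a i • z i) (∑ i ∈ s, a i • w i)]
  · linarith [norm_le_norm_add_norm_sub (∑ i ∈ s, a i • z i) (∑ i ∈ s, a i • w i)]

end IsEquivalentOn

theorem IsUnconditionalWith.norm_sum_smul_le_of_norm_le {U ε : ℝ} {s : Finset ι} {y : ι → E}
    {v : ι → F} (h : IsUnconditionalWith U y) (hy : ∀ i ∈ s, ‖y i‖ = 1) (hε : 0 ≤ ε)
    (hv : ∀ i ∈ s, ‖v i‖ ≤ ε) (a : ι → ℝ) :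
    ‖∑ i ∈ s, a i • v i‖ ≤ ε * (#s * U) * ‖∑ i ∈ s, a i • y i‖ := calc
  ‖∑ i ∈ s, a i • v i‖ ≤ ∑ i ∈ s, ε * |a i| := norm_sum_le_of_le s fun i hi => by
    rw [norm_smul, Real.norm_eq_abs, mul_comm]
    exact mul_le_mul_of_nonneg_right (hv i hi) (abs_nonneg _)
  _ = ε * ∑ i ∈ s, |a i| := (mul_sum ..).symm
  _ ≤ ε * (#s * U * ‖∑ i ∈ s, a i • y i‖) := by gcongr; exact h.sum_abs_le hy a
  _ = _ := by ring

theorem IsFinitelyRepresentableL1.of_fin {M : ℝ} {y : ℕ → E}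
    (h : ∀ n, ∃ (κ : Type) (t : Fin n → lp (fun _ : κ => ℝ) 1),
      IsEquivalentOn M univ (fun i : Fin n => y i) t) : IsFinitelyRepresentableL1 M y := by
  intro n
  obtain ⟨κ, t, ht⟩ := h n
  refine ⟨κ, fun i => if hi : i < n then t ⟨i, hi⟩ else 0, fun a => ?_⟩
  simpa only [sum_range, Fin.is_lt, dite_true] using ht fun i => a i

theorem CrudelyFinRepL1.exists_isFinitelyRepresentableL1 (h : CrudelyFinRepL1 E) :
    ∃ M, ∀ y : ℕ → E, IsFinitelyRepresentableL1 M y := by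
  obtain ⟨M, -, h⟩ := h
  refine ⟨M, fun y => .of_fin fun n => ?_⟩
  let y' : Fin n → Submodule.span ℝ (Set.range fun i : Fin n => y i) := fun i =>
    ⟨y i, Submodule.subset_span ⟨i, rfl⟩⟩
  obtain ⟨T, hT⟩ := h _ (FiniteDimensional.span_of_finite ℝ (Set.finite_range fun i : Fin n => y i))
  exact ⟨ℕ, fun i => T (y' i),
    IsEquivalentOn.coe_left_iff.mpr (IsEquivalentOn.map_of_le_norm_le hT univ y')⟩

theorem StronglyAsymptoticL1.exists_sum_norm_le {x : ℕ → E} (hx : StronglyAsymptoticL1 x) :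
    ∃ C, 1 ≤ C ∧ ∀ N, ∃ n₀, ∀ {κ : Type*} (L : Finset κ) (w : κ → E) (S : κ → Finset ℕ), #L ≤ N →
      (∀ l ∈ L, w l ∈ Submodule.span ℝ (x '' S l)) → (∀ l ∈ L, ∀ k ∈ S l, n₀ ≤ k) →
      (L : Set κ).PairwiseDisjoint S → ∑ l ∈ L, ‖w l‖ ≤ C * ‖∑ l ∈ L, w l‖ := by
  classical
  obtain ⟨f, C, hC, h⟩ := hx
  refine ⟨C, hC, fun N => ⟨(range (N + 1)).sup f, fun {κ} L w S hcard hw hS hdisj => ?_⟩⟩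
  let L' := {l ∈ L | w l ≠ 0}
  let e := L'.equivFin.symm
  have mem_L : ∀ i, (e i : κ) ∈ L := fun i => (mem_filter.mp (e i).2).1
  have norm_ne_zero : ∀ i, ‖w (e i)‖ ≠ 0 := fun i => norm_ne_zero_iff.mpr (mem_filter.mp (e i).2).2
  have hf : f #L' ≤ (range (N + 1)).sup f :=
    le_sup (mem_range_succ_iff.mpr ((card_filter_le _ _).trans hcard))
  have hlower := (h #L' (fun i => ‖w (e i)‖⁻¹ • w (e i)) (fun i => S (e i))
    (fun i => by rw [norm_smul, norm_inv, norm_norm, inv_mul_cancel₀ (norm_ne_zero i)])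
    (fun i => Submodule.smul_mem _ _ (hw _ (mem_L i)))
    (fun i k hk => hf.trans (hS _ (mem_L i) k hk))
    (fun i j hij => hdisj (mem_L i) (mem_L j) fun hl => hij (e.injective (Subtype.ext hl)))
    fun i => ‖w (e i)‖).1
  have sum_norm : ∑ i, ‖w (e i)‖ = ∑ l ∈ L, ‖w l‖ := by
    rw [e.sum_comp fun l => ‖w l‖, sum_coe_sort L' fun l => ‖w l‖]
    exact sum_filter_of_ne fun l _ hl => norm_ne_zero_iff.mp hl
  have sum_w : ∑ i, w (e i) = ∑ l ∈ L, w l := by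
    rw [e.sum_comp fun l => w l, sum_coe_sort L' w]
    exact sum_filter_of_ne fun l _ hl => hl
  simp only [abs_norm, smul_smul, mul_inv_cancel₀ (norm_ne_zero _), one_smul, sum_norm, sum_w]
    at hlower
  rwa [inv_mul_le_iff₀ (by linarith)] at hlower

theorem isEquivalentOn_lp_single {C : ℝ} [DecidableEq κ] {L : Finset κ} {w : κ → E}
    (h : ∀ a : κ → ℝ, ∑ l ∈ L, ‖a l • w l‖ ≤ C * ‖∑ l ∈ L, a l • w l‖) :
    IsEquivalentOn C L w fun l => lp.single (E := fun _ : κ => ℝ) 1 l ‖w l‖ := by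
  intro a
  have norm_eq : ‖∑ l ∈ L, a l • lp.single (E := fun _ : κ => ℝ) 1 l ‖w l‖‖ =
      ∑ l ∈ L, ‖a l • w l‖ := by
    have := lp.norm_sum_single (E := fun _ : κ => ℝ) (p := 1) (by norm_num)
      (fun l => a l • ‖w l‖) L
    simpa only [lp.single_smul, ENNReal.toReal_one, Real.rpow_one, norm_smul, norm_norm] using this
  rw [norm_eq]
  exact ⟨norm_sum_le _ _, h a⟩

theorem StronglyAsymptoticL1.exists_isEquivalentOn_lp_single {x : ℕ → E}
    (hx : StronglyAsymptoticL1 x) :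
    ∃ C, 1 ≤ C ∧ ∀ N, ∃ n₀, ∀ {κ : Type*} [DecidableEq κ] (L : Finset κ) (w : κ → E)
      (S : κ → Finset ℕ), #L ≤ N → (∀ l ∈ L, w l ∈ Submodule.span ℝ (x '' S l)) →
      (∀ l ∈ L, ∀ k ∈ S l, n₀ ≤ k) → (L : Set κ).PairwiseDisjoint S →
      IsEquivalentOn C L w fun l => lp.single (E := fun _ : κ => ℝ) 1 l ‖w l‖ := by
  obtain ⟨C, hC, h⟩ := hx.exists_sum_norm_le
  refine ⟨C, hC, fun N => (h N).imp fun n₀ hn₀ _ _ L w S hcard hw hS hdisj =>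
    isEquivalentOn_lp_single fun a => ?_⟩
  exact hn₀ L (fun l => a l • w l) S hcard (fun l hl => Submodule.smul_mem _ _ (hw l hl)) hS hdisj

theorem StronglyAsymptoticL1.exists_mul_card_le_norm_sum {x : ℕ → E}
    (hx : StronglyAsymptoticL1 x) (hx0 : ∀ k, x k ≠ 0) :
    ∃ c : ℝ, 0 < c ∧ ∀ m N, ∃ s : Finset ℕ, #s = m ∧ (∀ i ∈ s, N ≤ i) ∧
      c * m ≤ ‖∑ i ∈ s, ‖x i‖⁻¹ • x i‖ := by
  obtain ⟨C, hC, h⟩ := hx.exists_sum_norm_le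
  refine ⟨C⁻¹, by positivity, fun m N => ?_⟩
  obtain ⟨n₀, hn₀⟩ := h m
  have hcard : #(Ico (max N n₀) (max N n₀ + m)) = m := by simp
  have hmem : ∀ i ∈ Ico (max N n₀) (max N n₀ + m), max N n₀ ≤ i := fun i hi => (mem_Ico.mp hi).1
  refine ⟨_, hcard, fun i hi => (le_max_left _ _).trans (hmem i hi), ?_⟩
  have hsum := hn₀ (Ico (max N n₀) (max N n₀ + m)) (fun i => ‖x i‖⁻¹ • x i) (fun i => {i})
    hcard.le (fun i _ => Submodule.smul_mem _ _ (Submodule.subset_span ⟨i, by simp, rfl⟩))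
    (fun i hi k hk => mem_singleton.mp hk ▸ (le_max_right _ _).trans (hmem i hi))
    (fun i _ j _ hij => disjoint_singleton.mpr hij)
  simp only [norm_smul, norm_inv, norm_norm, inv_mul_cancel₀ (norm_ne_zero_iff.mpr (hx0 _)),
    sum_const, hcard, nsmul_eq_mul, mul_one] at hsum
  rwa [inv_mul_le_iff₀ (by positivity)]

end FiniteRepresentability

section Blocks

open Finset

variable {ι κ E : Type*} [Fintype ι] [NormedAddCommGroup E] [NormedSpace ℝ E]

theorem abs_floor_div_mul_le {r t : ℝ} (h : |r| ≤ t) (Q : ℕ) : |⌊r / t * Q⌋| ≤ Q := by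
  have hdiv : |r / t| ≤ 1 := by
    rw [abs_div, abs_of_nonneg ((abs_nonneg r).trans h)]
    exact div_le_one_of_le₀ h ((abs_nonneg r).trans h)
  have habs : |r / t * Q| ≤ Q := by
    rw [abs_mul, Nat.abs_cast]
    exact mul_le_of_le_one_left Q.cast_nonneg hdiv
  obtain ⟨hlower, hupper⟩ := abs_le.mp habs
  rw [abs_le, Int.le_floor]
  exact ⟨by push_cast; exact hlower, by exact_mod_cast (Int.floor_le _).trans hupper⟩

theorem abs_sub_floor_div_mul_le {r t : ℝ} (h : |r| ≤ t) {Q : ℕ} (hQ : 0 < Q) :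
    |r - ⌊r / t * Q⌋ / Q * t| ≤ t / Q := by
  have ht : 0 ≤ t := (abs_nonneg r).trans h
  have hr : r / t * t = r := div_mul_cancel_of_imp fun h0 => by simpa [h0] using h
  calc |r - ⌊r / t * Q⌋ / Q * t| = |Int.fract (r / t * Q) * (t / Q)| := by
        rw [← Int.self_sub_floor]
        congr 1
        field_simp
        linear_combination -(Q : ℝ) * hr
    _ ≤ 1 * (t / Q) := by
        rw [abs_mul, Int.abs_fract, abs_of_nonneg (by positivity : 0 ≤ t / Q)]
        gcongr
        exact (Int.fract_lt_one _).le
    _ = t / Q := one_mul _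

/-- The direction of `α` in `ℓ¹(ι)`, multiplied by `Q` and rounded down to an integer vector. -/
noncomputable def directionLabel (Q : ℕ) (α : ι → ℝ) (i : ι) : ℤ :=
  ⌊α i / (∑ j, |α j|) * Q⌋

/-- The integer vectors with entries in `[-Q, Q]`. -/
noncomputable def labelBox (ι : Type*) [Fintype ι] (Q : ℕ) : Finset (ι → ℤ) :=
  open scoped Classical in Fintype.piFinset fun _ : ι => Icc (-Q : ℤ) Q

theorem directionLabel_mem_labelBox (Q : ℕ) (α : ι → ℝ) : directionLabel Q α ∈ labelBox ι Q := by
  classical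
  rw [labelBox, Fintype.mem_piFinset]
  intro i
  rw [mem_Icc, ← abs_le]
  exact abs_floor_div_mul_le
    (single_le_sum (f := fun j => |α j|) (fun _ _ => abs_nonneg _) (mem_univ i)) Q

/-- The sum of the vectors `x k`, `k ∈ s`, whose coefficient vectors `α k` have the direction label
`l`, each weighted with the `ℓ¹`-norm of `α k`. -/
noncomputable def directionBlock (Q : ℕ) (s : Finset κ) (α : κ → ι → ℝ) (x : κ → E) (l : ι → ℤ) :
    E :=
  open scoped Classical in ∑ k ∈ s with directionLabel Q (α k) = l, (∑ j, |α k j|) • x k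

theorem sum_smul_directionBlock (Q : ℕ) (s : Finset κ) (α : κ → ι → ℝ) (x : κ → E)
    (b : (ι → ℤ) → ℝ) :
    ∑ l ∈ labelBox ι Q, b l • directionBlock Q s α x l =
      ∑ k ∈ s, (b (directionLabel Q (α k)) * ∑ j, |α k j|) • x k := by
  classical
  rw [← sum_fiberwise_of_maps_to (t := labelBox ι Q) (g := fun k => directionLabel Q (α k))
    fun k _ => directionLabel_mem_labelBox Q (α k)]
  refine sum_congr rfl fun l _ => ?_
  rw [directionBlock, smul_sum]
  refine sum_congr (by congr) fun k hk => ?_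
  rw [smul_smul, (mem_filter.mp hk).2]

theorem IsUnconditionalWith.norm_sub_sum_smul_directionBlock_le {U : ℝ} {x : κ → E}
    (h : IsUnconditionalWith U x) (hU : 0 ≤ U) {Q : ℕ} (hQ : 0 < Q) (s : Finset κ)
    (α : κ → ι → ℝ) (i : ι) :
    ‖∑ k ∈ s, α k i • x k - ∑ l ∈ labelBox ι Q, (l i / Q : ℝ) • directionBlock Q s α x l‖ ≤
      U ^ 2 / Q * ∑ j, ‖∑ k ∈ s, α k j • x k‖ := by
  rw [sum_smul_directionBlock Q s α x fun l => (l i / Q : ℝ), ← sum_sub_distrib]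
  simp only [← sub_smul]
  have coeff_le : ∀ k ∈ s, |α k i - directionLabel Q (α k) i / Q * (∑ j, |α k j|)| ≤
      |(Q : ℝ)⁻¹ * (∑ j, |α k j|)| := fun k _ => by
    rw [abs_of_nonneg (by positivity : 0 ≤ (Q : ℝ)⁻¹ * ∑ j, |α k j|), inv_mul_eq_div]
    exact abs_sub_floor_div_mul_le
      (single_le_sum (f := fun j => |α k j|) (fun _ _ => abs_nonneg _) (mem_univ i)) hQ
  have sum_eq : ∑ k ∈ s, ((Q : ℝ)⁻¹ * ∑ j, |α k j|) • x k =
      (Q : ℝ)⁻¹ • ∑ j, ∑ k ∈ s, |α k j| • x k := by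
    simp only [mul_smul, Finset.sum_smul, ← smul_sum, sum_comm (s := s)]
  calc _ ≤ U * ‖∑ k ∈ s, ((Q : ℝ)⁻¹ * ∑ j, |α k j|) • x k‖ := h s _ _ coeff_le
    _ = U / Q * ‖∑ j, ∑ k ∈ s, |α k j| • x k‖ := by
        rw [sum_eq, norm_smul, norm_inv, Real.norm_natCast, div_eq_mul_inv, mul_assoc]
    _ ≤ U / Q * ∑ j, U * ‖∑ k ∈ s, α k j • x k‖ := by
        gcongr
        exact norm_sum_le_of_le _ fun j _ => h s (α · j) _ fun k _ => (abs_abs (α k j)).le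
    _ = _ := by rw [← mul_sum]; ring

theorem directionBlock_mem_span (Q : ℕ) (s : Finset κ) (α : κ → ι → ℝ) (x : κ → E) (l : ι → ℤ) :
    directionBlock Q s α x l ∈
      Submodule.span ℝ (x '' {k | k ∈ s ∧ directionLabel Q (α k) = l}) := by
  unfold directionBlock
  exact Submodule.sum_mem _ fun k hk => Submodule.smul_mem _ _ <|
    Submodule.subset_span ⟨k, by simpa using hk, rfl⟩

end Blocks

section Tails

open Finset

variable {E : Type*} [NormedAddCommGroup E] [NormedSpace ℝ E]

theorem exists_forall_eq_sum_smul_of_mem_span_image {ι κ : Type*} [Finite ι] {x : κ → E}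
    {A : Set κ} {z : ι → E} (hz : ∀ i, z i ∈ Submodule.span ℝ (x '' A)) :
    ∃ (s : Finset κ) (α : κ → ι → ℝ), (s : Set κ) ⊆ A ∧ ∀ i, z i = ∑ k ∈ s, α k i • x k := by
  classical
  have := Fintype.ofFinite ι
  choose c hcA hc using fun i => (Finsupp.mem_span_image_iff_linearCombination ℝ).mp (hz i)
  refine ⟨univ.biUnion fun i => (c i).support, fun k i => c i k, ?_, fun i => ?_⟩
  · simpa only [coe_biUnion, Set.iUnion_subset_iff] using
      fun i _ => (Finsupp.mem_supported ℝ (c i)).mp (hcA i)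
  · rw [← hc i, Finsupp.linearCombination_apply]
    exact Finsupp.sum_of_support_subset _ (subset_biUnion_of_mem (fun i => (c i).support)
      (mem_univ i)) _ fun k _ => zero_smul ℝ (x k)

theorem StronglyAsymptoticL1.exists_isEquivalentOn_of_mem_span {x : ℕ → E} {U : ℝ}
    (hx : StronglyAsymptoticL1 x) (hu : IsUnconditionalWith U x) (hU : 0 ≤ U) :
    ∃ C, 1 ≤ C ∧ ∀ (ι : Type) [Fintype ι] (B ε : ℝ), 0 < ε → ∃ m, ∀ z : ι → E,
      (∀ i, z i ∈ Submodule.span ℝ (x '' {k | m ≤ k})) → (∀ i, ‖z i‖ ≤ B) →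
      ∃ (κ : Type) (w : ι → E) (t : ι → lp (fun _ : κ => ℝ) 1),
        (∀ i, ‖z i - w i‖ ≤ ε) ∧ IsEquivalentOn C univ w t := by
  classical
  obtain ⟨C, hC, h⟩ := hx.exists_isEquivalentOn_lp_single
  refine ⟨C, hC, fun ι _ B ε hε => ?_⟩
  obtain ⟨Q, hQ0, hQ⟩ : ∃ Q : ℕ, 0 < Q ∧ U ^ 2 / Q * (Fintype.card ι * B) ≤ ε := by
    obtain ⟨Q, hQ⟩ := exists_nat_gt (U ^ 2 * (Fintype.card ι * B) / ε)
    refine ⟨Q + 1, Q.succ_pos, ?_⟩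
    rw [div_lt_iff₀ hε] at hQ
    rw [div_mul_eq_mul_div, div_le_iff₀ (by positivity)]
    push_cast
    linarith
  obtain ⟨m, hm⟩ := h #(labelBox ι Q)
  refine ⟨m, fun z hz hB => ?_⟩
  obtain ⟨s, α, hs, hα⟩ := exists_forall_eq_sum_smul_of_mem_span_image hz
  let S : (ι → ℤ) → Finset ℕ := fun l => {k ∈ s | directionLabel Q (α k) = l}
  refine ⟨ι → ℤ, fun i => ∑ l ∈ labelBox ι Q, (l i / Q : ℝ) • directionBlock Q s α x l, _,
    fun i => ?_, (hm (labelBox ι Q) (directionBlock Q s α x) S le_rfl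
      (fun l _ => by simpa [S] using directionBlock_mem_span Q s α x l)
      (fun l _ k hk => hs (mem_filter.mp hk).1)
      (fun l _ l' _ hl => disjoint_filter.mpr fun k _ hk hk' => hl (hk.symm.trans hk'))).sum_smul
        univ fun i l => l i / Q⟩
  calc _ ≤ U ^ 2 / Q * ∑ j, ‖z j‖ := by
        simpa only [hα] using hu.norm_sub_sum_smul_directionBlock_le hU hQ0 s α i
    _ ≤ U ^ 2 / Q * (Fintype.card ι * B) := by
        gcongr
        simpa using sum_le_card_nsmul univ (fun j => ‖z j‖) B fun j _ => hB j
    _ ≤ ε := hQ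

theorem StronglyAsymptoticL1.exists_isEquivalentOn_of_mem_closure {x : ℕ → E} {U : ℝ}
    (hx : StronglyAsymptoticL1 x) (hu : IsUnconditionalWith U x) (hU : 0 ≤ U) :
    ∃ C, 1 ≤ C ∧ ∀ (ι : Type) [Fintype ι] (B ε : ℝ), 0 < ε → ∃ m, ∀ z : ι → E,
      (∀ i, z i ∈ (Submodule.span ℝ (x '' {k | m ≤ k})).topologicalClosure) → (∀ i, ‖z i‖ ≤ B) →
      ∃ (κ : Type) (w : ι → E) (t : ι → lp (fun _ : κ => ℝ) 1),
        (∀ i, ‖z i - w i‖ ≤ ε) ∧ IsEquivalentOn C univ w t := by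
  obtain ⟨C, hC, h⟩ := hx.exists_isEquivalentOn_of_mem_span hu hU
  refine ⟨C, hC, fun ι _ B ε hε => ?_⟩
  obtain ⟨m, hm⟩ := h ι (B + ε / 2) (ε / 2) (by positivity)
  refine ⟨m, fun z hz hB => ?_⟩
  choose v hv hzv using fun i => Metric.mem_closure_iff.mp (hz i) (ε / 2) (by positivity)
  have norm_le : ∀ i, ‖v i‖ ≤ B + ε / 2 := fun i =>
    (norm_le_norm_add_norm_sub (z i) (v i)).trans
      (add_le_add (hB i) ((dist_eq_norm (z i) (v i)) ▸ (hzv i).le))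
  obtain ⟨κ, w, t, hvw, hwt⟩ := hm v hv norm_le
  refine ⟨κ, w, t, fun i => ?_, hwt⟩
  simp only [← dist_eq_norm] at hvw ⊢
  linarith [dist_triangle (z i) (v i) (w i), hzv i, hvw i]

theorem StronglyAsymptoticL1.exists_isFinitelyRepresentableL1_of_embeds_tails {x y : ℕ → E}
    {U K : ℝ} (hx : StronglyAsymptoticL1 x) (hux : IsUnconditionalWith U x) (hU : 0 ≤ U)
    (huy : IsUnconditionalWith U y) (hy : ∀ i, ‖y i‖ = 1)
    (hemb : ∀ m, Embeds K E (Submodule.span ℝ (x '' {k | m ≤ k})).topologicalClosure) :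
    ∃ M, IsFinitelyRepresentableL1 M y := by
  obtain ⟨C, hC, h⟩ := hx.exists_isEquivalentOn_of_mem_closure hux hU
  refine ⟨C * (2 * K + 1), .of_fin fun n => ?_⟩
  let ε : ℝ := 2⁻¹ / (n * U + 1)
  have hε : ε * (n * U) ≤ 2⁻¹ := by
    rw [div_mul_eq_mul_div, div_le_iff₀ (by positivity)]
    linarith
  obtain ⟨m, hm⟩ := h (Fin n) K ε (by positivity)
  obtain ⟨T, hT⟩ := hemb m
  have norm_le : ∀ i : Fin n, ‖(T (y i) : E)‖ ≤ K := fun i =>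
    (hT (y i)).2.trans_eq (by rw [hy, mul_one])
  obtain ⟨κ, w, t, hTw, hwt⟩ := hm (fun i => T (y i)) (fun i => (T (y i)).2) norm_le
  have hyT : IsEquivalentOn K univ (fun i : Fin n => y i) (fun i => (T (y i) : E)) :=
    IsEquivalentOn.coe_right_iff.mpr (.map_of_le_norm_le hT univ fun i : Fin n => y i)
  have hyw := hyT.perturb fun a =>
    ((huy.comp Fin.valEmbedding).norm_sum_smul_le_of_norm_le (s := univ) (fun i _ => hy i)
      (by positivity) (fun i _ => hTw i) a).trans <| by
        rw [card_univ, Fintype.card_fin]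
        exact mul_le_mul_of_nonneg_right hε (norm_nonneg _)
  exact ⟨κ, _, hyw.trans (by linarith) (hwt.const_smul 2)⟩

end Tails

section Conclusion

open Finset

variable {X : Type*} [NormedAddCommGroup X] [NormedSpace ℝ X] [CompleteSpace X]

theorem containsL1_of_sum_abs_le_norm_sum {z : ℕ → X} {B c : ℝ} (hz : ∀ k, ‖z k‖ ≤ B) (hc : 0 < c)
    (h : ∀ (s : Finset ℕ) (a : ℕ → ℝ), c * ∑ k ∈ s, |a k| ≤ ‖∑ k ∈ s, a k • z k‖) :
    ContainsL1 X := by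
  have hasSum_abs : ∀ a : lp (fun _ : ℕ => ℝ) 1, HasSum (fun k => |a k|) ‖a‖ := fun a => by
    simpa using lp.hasSum_norm (p := 1) (by norm_num) a
  have norm_smul_le : ∀ (a : lp (fun _ : ℕ => ℝ) 1) k, ‖a k • z k‖ ≤ |a k| * B := fun a k => by
    rw [norm_smul, Real.norm_eq_abs]
    exact mul_le_mul_of_nonneg_left (hz k) (abs_nonneg _)
  have summable_smul : ∀ a : lp (fun _ : ℕ => ℝ) 1, Summable fun k => a k • z k := fun a =>
    .of_norm_bounded ((hasSum_abs a).mul_right B).summable (norm_smul_le a)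
  let T : lp (fun _ : ℕ => ℝ) 1 →ₗ[ℝ] X :=
    { toFun a := ∑' k, a k • z k
      map_add' a b := by
        simp only [lp.coeFn_add, Pi.add_apply, add_smul]
        exact (summable_smul a).tsum_add (summable_smul b)
      map_smul' r a := by
        simp only [lp.coeFn_smul, Pi.smul_apply, smul_assoc, RingHom.id_apply]
        exact (summable_smul a).tsum_const_smul r }
  refine ⟨T.mkContinuous B fun a => ?_, c, hc, fun a => ?_⟩
  · exact mul_comm B ‖a‖ ▸ tsum_of_norm_bounded ((hasSum_abs a).mul_right B) (norm_smul_le a)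
  · exact le_of_tendsto_of_tendsto' ((hasSum_abs a).const_mul c)
      ((summable_smul a).hasSum.norm) fun s => by simpa only [mul_sum] using h s a

theorem IsFinitelyRepresentableL1.containsL1 {y : ℕ → X} {M U c : ℝ}
    (hrep : IsFinitelyRepresentableL1 M y) (hu : IsUnconditionalWith U y) (hy : ∀ i, ‖y i‖ = 1)
    (hc : 0 < c) (hsum : ∀ m N, ∃ s : Finset ℕ, #s = m ∧ (∀ i ∈ s, N ≤ i) ∧
      c * m ≤ ‖∑ i ∈ s, y i‖) : ContainsL1 X := by
  have hU : 0 < U := zero_lt_one.trans_le <| by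
    simpa [hy] using hu.abs_mul_norm_le (mem_singleton_self 0) fun _ => 1
  obtain ⟨μ, f, hf⟩ := hrep.exists_Lp_one fun i => (hy i).le
  have norm_f : ∀ i, 1 ≤ ‖f i‖ ∧ ‖f i‖ ≤ M := fun i => by
    simpa only [hy, mul_one] using (hf {i}).norm_le (mem_singleton_self i)
  have hM : 0 < M := zero_lt_one.trans_le ((norm_f 0).1.trans (norm_f 0).2)
  obtain ⟨φ, hφ, hφ_sum⟩ := exists_strictMono_sum_abs_le_rademacherAverage (c := c / U)
    (by positivity) (fun i => (norm_f i).2) fun m N => by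
      obtain ⟨s, hs, hN, hle⟩ := hsum m N
      refine ⟨s, hs, hN, ?_⟩
      rw [div_mul_eq_mul_div, div_le_iff₀' hU]
      calc c * m ≤ ‖∑ i ∈ s, y i‖ := hle
        _ ≤ U * rademacherAverage s y := hu.norm_sum_le_rademacherAverage s
        _ ≤ U * rademacherAverage s f := by
          gcongr
          simpa only [one_smul] using (hf s).rademacherAverage_left_le fun _ => 1
  refine containsL1_of_sum_abs_le_norm_sum (z := fun k => y (φ k)) (c := c / U / 4 / (M * U))
    (fun k => (hy (φ k)).le) (by positivity) fun s a => ?_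
  rw [div_mul_eq_mul_div, div_le_iff₀' (by positivity)]
  calc c / U / 4 * ∑ k ∈ s, |a k| ≤ rademacherAverage s fun k => a k • f (φ k) := hφ_sum s a
    _ ≤ M * rademacherAverage s fun k => a k • y (φ k) :=
      (hf (s.map ⟨φ, hφ.injective⟩)).comp.rademacherAverage_right_le a
    _ ≤ M * (U * ‖∑ k ∈ s, a k • y (φ k)‖) := by
      gcongr
      exact (hu.comp ⟨φ, hφ.injective⟩).rademacherAverage_le s a
    _ = _ := by ring

theorem asymptoticL1_finrep_contains_l1_general {x : ℕ → X} (hx : ∀ n, x n ≠ 0)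
    (hu : IsUncondBasis x) (ha : StronglyAsymptoticL1 x) :
    (CrudelyFinRepL1 X → ContainsL1 X) ∧
    (¬ ContainsL1 X →
      ¬ ∃ K : ℝ, ∀ m : ℕ,
        Embeds K X ↥((Submodule.span ℝ (x '' {k | m ≤ k})).topologicalClosure)) := by
  obtain ⟨U, hU, hux⟩ := hu.exists_isUnconditionalWith
  obtain ⟨c, hc, hsum⟩ := ha.exists_mul_card_le_norm_sum hx
  have huy := hux.smul fun k => ‖x k‖⁻¹
  have hy : ∀ k, ‖‖x k‖⁻¹ • x k‖ = 1 := fun k => norm_smul_inv_norm (𝕜 := ℝ) (hx k)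
  constructor
  · intro h
    obtain ⟨M, hM⟩ := h.exists_isFinitelyRepresentableL1
    exact (hM _).containsL1 huy hy hc hsum
  · rintro hno ⟨K, hK⟩
    obtain ⟨M, hM⟩ :=
      ha.exists_isFinitelyRepresentableL1_of_embeds_tails hux (by linarith) huy hy hK
    exact hno (hM.containsL1 huy hy hc hsum)

end Conclusion

/-- if `X` has an unconditional strongly asymptotic `ℓ¹` basis and is crudely
finitely representable in `ℓ¹`, then `X` contains an isomorphic copy of `ℓ¹`.  Consequently,
such a space containing no copy of `ℓ¹` (e.g. a subspace of Tsirelson space generated by a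
subsequence of its standard basis) does not embed uniformly into all of its own tail
subspaces. -/
theorem asymptoticL1_finrep_contains_l1
    {X : Type*} [NormedAddCommGroup X] [NormedSpace ℝ X] [CompleteSpace X]
    (x : ℕ → X) (hb : IsBasicSeq x)
    (hdense : DenseRange fun a : ℕ →₀ ℝ => ∑ k ∈ a.support, a k • x k)
    (hu : IsUncondBasis x) (ha : StronglyAsymptoticL1 x) :
    (CrudelyFinRepL1 X → ContainsL1 X) ∧
    (¬ ContainsL1 X →
      ¬ ∃ K : ℝ, 0 < K ∧ ∀ m : ℕ,
        Embeds K X ↥((Submodule.span ℝ (x '' {k | m ≤ k})).topologicalClosure)) := by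
  obtain ⟨hfinrep, htails⟩ := asymptoticL1_finrep_contains_l1_general hb.1 hu ha
  exact ⟨hfinrep, fun hno ⟨K, _, hK⟩ => htails hno ⟨K, hK⟩⟩
end
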